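/- Asymptotically almost surely, the number of subtrees of a uniformly random labelled tree on n vertices is at most 1.41960^n; that is, the probability that c(𝒯_n) ≤ 1.41960^n tends to 1 as n → ∞. -/

import Mathlib

/-!
Root a labelled tree and orient every edge towards the root. A subtree is then determined by its
top vertex together with the set of all ancestors of its vertices, so the number of subtrees is at
most `n * Q`, where `Q` counts the closed sets: the vertex sets that contain the parent of each of
their elements (`card_subtrees_le`). It suffices to bound the moment `∑ Q ^ s` over all rooted
forests on `n` vertices for one suitable small `s > 0`, and to apply Markov's inequality.

The number `Q` is multiplicative over the trees of a forest, and a rooted tree has `1 + Q` closed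
sets when the forest obtained by deleting its root has `Q` (`card_closedSets_split`). For
`q ≤ 250` the forests with `Q = q` have an exponential generating function `ν_q`; as a Dirichlet
series in `q` these satisfy `ν = exp (x ∑ ν_q (1 + q) ^ (-z))`. Comparing `ν` with the exponent
under the derivation that multiplies the `q`-th coefficient by the number of prime factors of `q`
gives a recursion for `ν_q`, hence certified numerical upper bounds for `ν_q (1 / e)`
(`sum_typeCoeff_le`, `sum_typeCoeff_le_table`).

Put `h = 252 / 251`. Since `1 + Q ≤ h * Q` for `Q > 250`,
`(1 + Q) ^ s ≤ h ^ s * Q ^ s + ∑_{q ≤ 250} ((1 + q) ^ s - h ^ s * q ^ s) [Q = q]`, so the moments are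
dominated by the coefficients of the solution `β` of
`β = exp (x (h ^ s β + ∑ ((1 + q) ^ s - h ^ s q ^ s) ν_q))` (`sum_rpow_le`). At
`x = exp (-1 - 0.3502 s)` the partial sums of `β` stay below `e` (`powCoeff_le`), as soon as a certain
inequality between functions of `s` holds. It is an equality at `s = 0`, and the numerical bounds
show that the derivatives there compare strictly (`sum_log_lt`), so it holds for some `s > 0`
(`exists_exponent`).

Together with Stirling's upper bound for `n!` and the lower bound `n ^ (n - 2)` for the number of
labelled trees (`card_trees_ge`), the proportion of trees with more than `1.4196 ^ n` subtrees is at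
most a polynomial in `n` times `(exp 0.3502 / 1.4196) ^ (s n)`, and `exp 0.3502 < 1.4196`.
-/

open Filter Topology

/-- The number of subtrees of a graph `G` on `Fin n`: the number of (nonempty) vertex
subsets inducing a connected subgraph. -/
noncomputable def subtreeCount {n : ℕ} (G : SimpleGraph (Fin n)) : ℕ :=
  Nat.card {S : Set (Fin n) // (G.induce S).Connected}

/-- The probability that a uniformly random labelled tree on `n` vertices satisfies `p`. -/
noncomputable def treeProb (n : ℕ) (p : SimpleGraph (Fin n) → Prop) : ℝ :=
  (Nat.card {G : SimpleGraph (Fin n) // G.IsTree ∧ p G} : ℝ) /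
    (Nat.card {G : SimpleGraph (Fin n) // G.IsTree} : ℝ)

set_option linter.unusedSectionVars false

open scoped Nat

/-! ### Rooted forests and their closed sets -/

section Forests

/-- A partial parent function is a rooted forest when some rank strictly decreases from each
vertex to its parent; the roots are the vertices without a parent. -/
def IsForest {V : Type*} (p : V → Option V) : Prop :=
  ∃ rank : V → ℕ, ∀ v w, p v = some w → rank w < rank v

/-- `Anc p v w`: the vertex `w` is `v` itself or an ancestor of `v` in the forest `p`. -/
def Anc {V : Type*} (p : V → Option V) : V → V → Prop :=
  Relation.ReflTransGen (fun v w => p v = some w)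

variable {V : Type*} [Fintype V] [DecidableEq V]

open scoped Classical in
/-- The rooted forests with vertex set `S`. -/
noncomputable def forests (S : Finset V) : Finset (V → Option V) :=
  Finset.univ.filter fun p => IsForest p ∧ ∀ v w, p v = some w → v ∈ S ∧ w ∈ S

open scoped Classical in
/-- The subsets of `S` that contain the parent of each of their elements. -/
noncomputable def closedSets (p : V → Option V) (S : Finset V) : Finset (Finset V) :=
  S.powerset.filter fun D => ∀ v ∈ D, ∀ w, p v = some w → w ∈ D

/-- The forest induced by `p` on `T`: a vertex whose parent is outside `T` becomes a root. -/
def restr (p : V → Option V) (T : Finset V) : V → Option V :=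
  fun v => if v ∈ T then (p v).filter (· ∈ T) else none

lemma restr_eq_some {p : V → Option V} {T : Finset V} {v w : V} :
    restr p T v = some w ↔ v ∈ T ∧ w ∈ T ∧ p v = some w := by
  unfold restr
  split_ifs with h
  · simp [Option.filter_eq_some_iff, h, and_comm]
  · simp [h]

lemma mem_forests {S : Finset V} {p : V → Option V} :
    p ∈ forests S ↔ IsForest p ∧ ∀ v w, p v = some w → v ∈ S ∧ w ∈ S := by
  simp [forests]

lemma mem_closedSets {S D : Finset V} {p : V → Option V} :
    D ∈ closedSets p S ↔ D ⊆ S ∧ ∀ v ∈ D, ∀ w, p v = some w → w ∈ D := by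
  simp [closedSets]

lemma restr_mem_forests {p : V → Option V} (hp : IsForest p) (T : Finset V) :
    restr p T ∈ forests T := by
  obtain ⟨f, hf⟩ := hp
  rw [mem_forests]
  refine ⟨⟨f, fun v w h => hf v w (restr_eq_some.1 h).2.2⟩, fun v w h => ?_⟩
  have := restr_eq_some.1 h
  exact ⟨this.1, this.2.1⟩

lemma exists_root {p : V → Option V} (hp : IsForest p) (m : V) :
    ∃ r, Anc p m r ∧ p r = none := by
  obtain ⟨f, hf⟩ := hp
  induction h : f m using Nat.strong_induction_on generalizing m with
  | _ k ih =>
    cases hm : p m with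
    | none => exact ⟨m, Relation.ReflTransGen.refl, hm⟩
    | some w =>
      obtain ⟨r, h1, h2⟩ := ih (f w) (h ▸ hf m w hm) w rfl
      exact ⟨r, Relation.ReflTransGen.head hm h1, h2⟩

lemma anc_of_parent {p : V → Option V} {v w r : V} (h : p v = some w) (hvr : v ≠ r) :
    Anc p v r ↔ Anc p w r := by
  constructor
  · intro h'
    rcases Relation.ReflTransGen.cases_head h' with h1 | ⟨c, h1, h2⟩
    · exact absurd h1 hvr
    · rw [h] at h1
      cases h1
      exact h2
  · exact fun h' => Relation.ReflTransGen.head h h'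

lemma mem_closed_of_anc {p : V → Option V} {D S : Finset V} (hD : D ∈ closedSets p S)
    {v r : V} (hv : v ∈ D) (h : Anc p v r) : r ∈ D := by
  induction h with
  | refl => exact hv
  | tail _ h2 ih => exact (mem_closedSets.1 hD).2 _ ih _ h2

lemma empty_mem_closedSets (p : V → Option V) (S : Finset V) : ∅ ∈ closedSets p S := by
  simp [mem_closedSets]

lemma card_closedSets_pos (p : V → Option V) (S : Finset V) : 0 < (closedSets p S).card :=
  Finset.card_pos.2 ⟨_, empty_mem_closedSets p S⟩

open scoped Classical in
/-- The vertices of `S` lying below `r`. -/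
noncomputable def below (p : V → Option V) (S : Finset V) (r : V) : Finset V :=
  S.filter fun v => Anc p v r

lemma mem_below {p : V → Option V} {S : Finset V} {r v : V} :
    v ∈ below p S r ↔ v ∈ S ∧ Anc p v r := by
  simp [below]

lemma parent_mem_below_iff {p : V → Option V} {S : Finset V} (hp : p ∈ forests S) {r v w : V}
    (hr : p r = none) (h : p v = some w) : v ∈ below p S r ↔ w ∈ below p S r := by
  have hvr : v ≠ r := by rintro rfl; simp [hr] at h
  have := (mem_forests.1 hp).2 v w h
  simp [mem_below, anc_of_parent h hvr, this]

/-- The number of closed sets of a forest is multiplicative over its trees, and the tree rooted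
at `r` has one closed set more (the empty one) than the forest obtained by removing `r`. -/
lemma card_closedSets_split {p : V → Option V} {S : Finset V} (hp : p ∈ forests S) {r : V}
    (hrS : r ∈ S) (hr : p r = none) :
    (closedSets p S).card =
      (1 + (closedSets (restr p ((below p S r).erase r)) ((below p S r).erase r)).card) *
        (closedSets (restr p (S \ below p S r)) (S \ below p S r)).card := by
  set C := below p S r with hC
  have hCS : C ⊆ S := fun v hv => (mem_below.1 hv).1
  have hrC : r ∈ C := mem_below.2 ⟨hrS, Relation.ReflTransGen.refl⟩
  have key : ∀ {v w}, p v = some w → (v ∈ C ↔ w ∈ C) := fun h => parent_mem_below_iff hp hr h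
  have hS : ∀ {v w}, p v = some w → v ∈ S ∧ w ∈ S := fun h => (mem_forests.1 hp).2 _ _ h
  have h1 : (closedSets p S).card = (closedSets p C ×ˢ closedSets p (S \ C)).card := by
    apply Finset.card_nbij' (fun D => (D ∩ C, D \ C)) (fun E => E.1 ∪ E.2)
    · intro D hD
      simp only [Finset.mem_coe, mem_closedSets, Finset.mem_product] at hD ⊢
      refine ⟨⟨Finset.inter_subset_right, ?_⟩, Finset.sdiff_subset_sdiff hD.1 le_rfl, ?_⟩
      · intro v hv w hw
        rw [Finset.mem_inter] at hv ⊢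
        exact ⟨hD.2 v hv.1 w hw, (key hw).1 hv.2⟩
      · intro v hv w hw
        rw [Finset.mem_sdiff] at hv ⊢
        exact ⟨hD.2 v hv.1 w hw, fun h => hv.2 ((key hw).2 h)⟩
    · intro E hE
      simp only [Finset.mem_coe, mem_closedSets, Finset.mem_product] at hE ⊢
      refine ⟨Finset.union_subset (hE.1.1.trans hCS) (hE.2.1.trans Finset.sdiff_subset), ?_⟩
      intro v hv w hw
      rw [Finset.mem_union] at hv ⊢
      rcases hv with hv | hv
      · exact Or.inl (hE.1.2 v hv w hw)
      · exact Or.inr (hE.2.2 v hv w hw)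
    · intro D hD
      ext v
      simp only [Finset.mem_union, Finset.mem_inter, Finset.mem_sdiff]
      tauto
    · rintro ⟨E, F⟩ hE
      simp only [Finset.mem_coe, mem_closedSets, Finset.mem_product] at hE
      have hE1 := hE.1.1
      have hE2 := hE.2.1
      ext v
      · have a := @hE1 v
        have b := @hE2 v
        simp only [Finset.mem_union, Finset.mem_inter, Finset.mem_sdiff] at *
        tauto
      · have a := @hE1 v
        have b := @hE2 v
        simp only [Finset.mem_union, Finset.mem_sdiff] at *
        tauto
  have h2 : closedSets (restr p (S \ C)) (S \ C) = closedSets p (S \ C) := by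
    ext D
    simp only [mem_closedSets]
    refine and_congr_right fun hD => forall₂_congr fun v hv => forall_congr' fun w => ?_
    rw [restr_eq_some]
    have hv' := hD hv
    constructor
    · intro h hw
      refine h ⟨hv', ?_, hw⟩
      rw [Finset.mem_sdiff] at hv' ⊢
      exact ⟨(hS hw).2, fun h => hv'.2 ((key hw).2 h)⟩
    · exact fun h hw => h hw.2.2
  have h3 : closedSets p C = insert ∅ ((closedSets (restr p (C.erase r)) (C.erase r)).image
      (insert r)) := by
    ext D
    simp only [Finset.mem_insert, Finset.mem_image]
    constructor
    · intro hD
      rcases D.eq_empty_or_nonempty with h | ⟨v, hv⟩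
      · exact Or.inl h
      · right
        have hDC := (mem_closedSets.1 hD).1
        have hrD : r ∈ D := mem_closed_of_anc hD hv (mem_below.1 (hDC hv)).2
        refine ⟨D.erase r, ?_, Finset.insert_erase hrD⟩
        rw [mem_closedSets]
        refine ⟨Finset.erase_subset_erase r hDC, fun v hv w hw => ?_⟩
        rw [restr_eq_some] at hw
        rw [Finset.mem_erase] at hv ⊢
        exact ⟨(Finset.mem_erase.1 hw.2.1).1, (mem_closedSets.1 hD).2 v hv.2 w hw.2.2⟩
    · rintro (rfl | ⟨E, hE, rfl⟩)
      · exact empty_mem_closedSets _ _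
      · rw [mem_closedSets] at hE ⊢
        refine ⟨?_, fun v hv w hw => ?_⟩
        · exact Finset.insert_subset hrC (hE.1.trans (Finset.erase_subset _ _))
        · rw [Finset.mem_insert] at hv ⊢
          rcases hv with rfl | hv
          · simp [hr] at hw
          · by_cases hwr : w = r
            · exact Or.inl hwr
            · right
              refine hE.2 v hv w (restr_eq_some.2 ⟨hE.1 hv, ?_, hw⟩)
              exact Finset.mem_erase.2 ⟨hwr, (key hw).1 (Finset.mem_of_mem_erase (hE.1 hv))⟩
  have h4 : (closedSets p C).card =
      1 + (closedSets (restr p (C.erase r)) (C.erase r)).card := by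
    rw [h3, Finset.card_insert_of_notMem, Finset.card_image_of_injOn, add_comm]
    · intro E hE F hF h
      have hE' := (mem_closedSets.1 hE).1
      have hF' := (mem_closedSets.1 hF).1
      have e1 : r ∉ E := fun h => by simpa using hE' h
      have e2 : r ∉ F := fun h => by simpa using hF' h
      rw [← Finset.erase_insert e1, ← Finset.erase_insert e2]
      exact congrArg (fun X => X.erase r) h
    · simp
  rw [h1, Finset.card_product, h4, h2]

/-- A forest is determined by one of its trees, with the root of that tree removed, and by the
rest. -/
lemma forest_ext_split {p q : V → Option V} {S : Finset V} (hp : p ∈ forests S)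
    (hq : q ∈ forests S) {r : V} (hpr : p r = none) (hqr : q r = none)
    (hC : below p S r = below q S r)
    (h1 : restr p ((below p S r).erase r) = restr q ((below p S r).erase r))
    (h2 : restr p (S \ below p S r) = restr q (S \ below p S r)) : p = q := by
  have aux : ∀ {p q : V → Option V} (_ : p ∈ forests S) (_ : q ∈ forests S)
      (_ : p r = none) (_ : q r = none) (_ : below p S r = below q S r)
      (_ : restr p ((below p S r).erase r) = restr q ((below p S r).erase r))
      (_ : restr p (S \ below p S r) = restr q (S \ below p S r)) (v w : V),
      p v = some w → q v = some w := by
    intro p q hp hq hpr hqr hC h1 h2 v w hw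
    obtain ⟨hvS, hwS⟩ := (mem_forests.1 hp).2 v w hw
    have hvr : v ≠ r := by rintro rfl; simp [hpr] at hw
    by_cases hv : v ∈ below p S r
    · have hwC := (parent_mem_below_iff hp hpr hw).1 hv
      by_cases hwr : w = r
      · subst hwr
        -- the parent of `v` under `q` stays in the tree of `r`; it can only be `r` itself
        rw [hC] at hv
        rcases Relation.ReflTransGen.cases_head (mem_below.1 hv).2 with h | ⟨c, hc, _⟩
        · exact absurd h hvr
        · by_cases hcr : c = w
          · rw [← hcr]; exact hc
          · have hcC := (parent_mem_below_iff hq hqr hc).1 hv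
            rw [← hC] at hcC hv
            have : restr q ((below p S w).erase w) v = some c :=
              restr_eq_some.2 ⟨Finset.mem_erase.2 ⟨hvr, hv⟩,
                Finset.mem_erase.2 ⟨hcr, hcC⟩, hc⟩
            rw [← h1] at this
            have := (restr_eq_some.1 this).2.2
            rw [hw] at this
            exact absurd (Option.some.inj this).symm hcr
      · have : restr p ((below p S r).erase r) v = some w :=
          restr_eq_some.2 ⟨Finset.mem_erase.2 ⟨hvr, hv⟩, Finset.mem_erase.2 ⟨hwr, hwC⟩, hw⟩
        rw [h1] at this
        exact (restr_eq_some.1 this).2.2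
    · have hwC : w ∉ below p S r := fun h => hv ((parent_mem_below_iff hp hpr hw).2 h)
      have : restr p (S \ below p S r) v = some w :=
        restr_eq_some.2 ⟨Finset.mem_sdiff.2 ⟨hvS, hv⟩, Finset.mem_sdiff.2 ⟨hwS, hwC⟩, hw⟩
      rw [h2] at this
      exact (restr_eq_some.1 this).2.2
  funext v
  ext w
  refine ⟨aux hp hq hpr hqr hC h1 h2 v w, aux hq hp hqr hpr hC.symm ?_ ?_ v w⟩
  · rw [← hC]; exact h1.symm
  · rw [← hC]; exact h2.symm

/-- Summing over forests on `S` by splitting off the tree that contains the vertex `m`. -/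
lemma sum_forests_le {S : Finset V} {m : V} (hm : m ∈ S) (F : ℕ → ℝ) (hF : ∀ k, 0 ≤ F k) :
    ∑ p ∈ forests S, F (closedSets p S).card ≤
      ∑ C ∈ S.powerset.filter (m ∈ ·), ∑ r ∈ C,
        ∑ x ∈ forests (C.erase r) ×ˢ forests (S \ C),
          F ((1 + (closedSets x.1 (C.erase r)).card) * (closedSets x.2 (S \ C)).card) := by
  classical
  have hr : ∀ p : V → Option V, ∃ r, p ∈ forests S → Anc p m r ∧ p r = none := by
    intro p
    by_cases hp : p ∈ forests S
    · obtain ⟨r, h⟩ := exists_root (mem_forests.1 hp).1 m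
      exact ⟨r, fun _ => h⟩
    · exact ⟨m, fun h => absurd h hp⟩
  choose r hr using hr
  have hrS : ∀ p ∈ forests S, r p ∈ S := by
    intro p hp
    have : S ∈ closedSets p S := by
      rw [mem_closedSets]
      exact ⟨le_rfl, fun v _ w h => ((mem_forests.1 hp).2 v w h).2⟩
    exact mem_closed_of_anc this hm (hr p hp).1
  let I : Finset (Σ _ : Finset V, Σ _ : V, (V → Option V) × (V → Option V)) :=
    (S.powerset.filter (m ∈ ·)).sigma fun C => C.sigma fun r =>
      forests (C.erase r) ×ˢ forests (S \ C)
  let f : (V → Option V) → Σ _ : Finset V, Σ _ : V, (V → Option V) × (V → Option V) :=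
    fun p => ⟨below p S (r p), r p, restr p ((below p S (r p)).erase (r p)),
      restr p (S \ below p S (r p))⟩
  let g : (Σ _ : Finset V, Σ _ : V, (V → Option V) × (V → Option V)) → ℝ := fun y =>
    F ((1 + (closedSets y.2.2.1 (y.1.erase y.2.1)).card) *
      (closedSets y.2.2.2 (S \ y.1)).card)
  have hinj : Set.InjOn f (forests S : Set (V → Option V)) := by
    intro p hp q hq h
    simp only [f, Sigma.mk.injEq, heq_eq_eq, Prod.mk.injEq] at h
    obtain ⟨h1, h2, h3, h4⟩ := h
    have hq' := (hr q hq).2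
    rw [← h2] at h1 hq'
    rw [← h2, ← h1] at h3
    rw [← h2, ← h1] at h4
    exact forest_ext_split hp hq (hr p hp).2 hq' h1 h3 h4
  calc ∑ p ∈ forests S, F (closedSets p S).card = ∑ p ∈ forests S, g (f p) := by
        refine Finset.sum_congr rfl fun p hp => ?_
        rw [card_closedSets_split hp (hrS p hp) (hr p hp).2]
    _ = ∑ y ∈ (forests S).image f, g y := (Finset.sum_image hinj).symm
    _ ≤ ∑ y ∈ I, g y := by
        refine Finset.sum_le_sum_of_subset_of_nonneg ?_ fun y _ _ => hF _
        intro y hy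
        obtain ⟨p, hp, rfl⟩ := Finset.mem_image.1 hy
        have hp' := (mem_forests.1 hp).1
        simp only [I, f, Finset.mem_sigma, Finset.mem_filter, Finset.mem_powerset,
          Finset.mem_product]
        refine ⟨⟨fun v hv => (mem_below.1 hv).1, mem_below.2 ⟨hm, (hr p hp).1⟩⟩,
          mem_below.2 ⟨hrS p hp, Relation.ReflTransGen.refl⟩,
          restr_mem_forests hp' _, restr_mem_forests hp' _⟩
    _ = _ := by
        rw [Finset.sum_sigma]
        refine Finset.sum_congr rfl fun C _ => ?_
        rw [Finset.sum_sigma]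

end Forests

/-! ### Recursions for weighted counts of forests -/

section Counting

variable {V : Type*} [Fintype V] [DecidableEq V]

lemma sum_powerset_mem_card {S : Finset V} {m : V} (hm : m ∈ S) {n : ℕ} (hS : S.card = n + 1)
    (G : ℕ → ℝ) :
    ∑ C ∈ S.powerset.filter (m ∈ ·), G C.card =
      ∑ j ∈ Finset.range (n + 1), (n.choose j : ℝ) * G (j + 1) := by
  have hS' : (S.erase m).card = n := by rw [Finset.card_erase_of_mem hm, hS]; rfl
  have := Finset.sum_powerset_apply_card (x := S.erase m) (fun k => G (k + 1))
  rw [hS'] at this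
  simp only [nsmul_eq_mul] at this
  rw [← this]
  refine Finset.sum_nbij' (fun C => C.erase m) (fun C => insert m C) ?_ ?_ ?_ ?_ ?_
  · intro C hC
    simp only [Finset.mem_filter, Finset.mem_powerset] at hC ⊢
    exact Finset.erase_subset_erase m hC.1
  · intro C hC
    simp only [Finset.mem_filter, Finset.mem_powerset] at hC ⊢
    exact ⟨Finset.insert_subset hm (hC.trans (Finset.erase_subset _ _)),
      Finset.mem_insert_self _ _⟩
  · intro C hC
    simp only [Finset.mem_filter] at hC
    exact Finset.insert_erase hC.2
  · intro C hC
    simp only [Finset.mem_powerset] at hC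
    exact Finset.erase_insert fun h => by simpa using hC h
  · intro C hC
    simp only [Finset.mem_filter] at hC
    rw [Finset.card_erase_add_one hC.2]

/-- The recursive bound for sums over forests: the tree containing a fixed vertex has `j + 1`
vertices, `j + 1` possible roots, and the other `j` of its vertices are chosen freely. -/
lemma sum_forests_rec {ι : Type*} (I : Finset ι) (F : ℕ → ℝ) (X Y : ι → ℕ → ℝ)
    (ξ υ : ι → ℕ → ℝ) (n : ℕ)
    (hF : ∀ k, 0 ≤ F k) (hX : ∀ i k, 0 ≤ X i k) (hY : ∀ i k, 0 ≤ Y i k)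
    (hmul : ∀ a b, 1 ≤ a → 1 ≤ b → F ((1 + a) * b) ≤ ∑ i ∈ I, X i a * Y i b)
    (hξ : ∀ i ∈ I, ∀ T : Finset V, T.card ≤ n →
      ∑ p ∈ forests T, X i (closedSets p T).card ≤ (T.card ! : ℝ) * ξ i T.card)
    (hυ : ∀ i ∈ I, ∀ T : Finset V, T.card ≤ n →
      ∑ p ∈ forests T, Y i (closedSets p T).card ≤ (T.card ! : ℝ) * υ i T.card)
    (S : Finset V) (hS : S.card = n + 1) :
    ∑ p ∈ forests S, F (closedSets p S).card ≤
      (n ! : ℝ) * ∑ j ∈ Finset.range (n + 1), ((j : ℝ) + 1) * ∑ i ∈ I, ξ i j * υ i (n - j) := by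
  obtain ⟨m, hm⟩ : S.Nonempty := by rw [← Finset.card_pos, hS]; omega
  refine (sum_forests_le hm F hF).trans ?_
  let G : ℕ → ℝ := fun k => k * ∑ i ∈ I, (((k - 1)! : ℝ) * ξ i (k - 1)) *
    (((n + 1 - k)! : ℝ) * υ i (n + 1 - k))
  have step : ∀ C ∈ S.powerset.filter (m ∈ ·), (∑ r ∈ C,
        ∑ x ∈ forests (C.erase r) ×ˢ forests (S \ C),
          F ((1 + (closedSets x.1 (C.erase r)).card) * (closedSets x.2 (S \ C)).card)) ≤
        G C.card := by
    intro C hC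
    simp only [Finset.mem_filter, Finset.mem_powerset] at hC
    have hC1 : 1 ≤ C.card := Finset.card_pos.2 ⟨m, hC.2⟩
    have hsd : (S \ C).card = n + 1 - C.card := by
      rw [Finset.card_sdiff_of_subset hC.1, hS]
    have : ∀ r ∈ C, (∑ x ∈ forests (C.erase r) ×ˢ forests (S \ C),
          F ((1 + (closedSets x.1 (C.erase r)).card) * (closedSets x.2 (S \ C)).card)) ≤
        ∑ i ∈ I, (((C.card - 1)! : ℝ) * ξ i (C.card - 1)) *
          (((n + 1 - C.card)! : ℝ) * υ i (n + 1 - C.card)) := by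
      intro r hr
      have her : (C.erase r).card = C.card - 1 := Finset.card_erase_of_mem hr
      have hCn : C.card ≤ n + 1 := hS ▸ Finset.card_le_card hC.1
      calc _ ≤ ∑ x ∈ forests (C.erase r) ×ˢ forests (S \ C), ∑ i ∈ I,
              X i (closedSets x.1 (C.erase r)).card * Y i (closedSets x.2 (S \ C)).card :=
            Finset.sum_le_sum fun x _ =>
              hmul _ _ (card_closedSets_pos _ _) (card_closedSets_pos _ _)
        _ = ∑ i ∈ I, (∑ p ∈ forests (C.erase r), X i (closedSets p (C.erase r)).card) *
              (∑ p ∈ forests (S \ C), Y i (closedSets p (S \ C)).card) := by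
            rw [Finset.sum_comm]
            refine Finset.sum_congr rfl fun i _ => ?_
            rw [Finset.sum_mul_sum, Finset.sum_product]
        _ ≤ _ := by
            refine Finset.sum_le_sum fun i hi => ?_
            have h1 := hξ i hi (C.erase r) (by omega)
            have h2 := hυ i hi (S \ C) (by omega)
            rw [her] at h1
            rw [hsd] at h2
            have h3 := Finset.sum_nonneg fun p (_ : p ∈ forests (C.erase r)) =>
              hX i (closedSets p (C.erase r)).card
            exact mul_le_mul h1 h2 (Finset.sum_nonneg fun p _ => hY i _) (h3.trans h1)
    refine (Finset.sum_le_sum this).trans ?_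
    rw [Finset.sum_const, nsmul_eq_mul]
  refine (Finset.sum_le_sum step).trans ?_
  rw [sum_powerset_mem_card hm hS, Finset.mul_sum]
  refine Finset.sum_le_sum fun j hj => le_of_eq ?_
  have hj' : j ≤ n := by simpa [Nat.lt_succ_iff] using hj
  have hch : (n.choose j : ℝ) * j ! * (n - j)! = n ! := by
    exact_mod_cast Nat.choose_mul_factorial_mul_factorial hj'
  simp only [G, Nat.add_sub_cancel, Nat.add_sub_add_right, ← hch]
  rw [Finset.mul_sum, Finset.mul_sum, Finset.mul_sum, Finset.mul_sum]
  refine Finset.sum_congr rfl fun i _ => ?_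
  push_cast
  ring

/-- Coefficients (divided by `n!`) of the exponential generating function of rooted forests
on `n` labelled vertices with exactly `q` closed sets. -/
noncomputable def typeCoeff : ℕ → ℕ → ℝ
  | 0, q => if q = 1 then 1 else 0
  | n + 1, q => (∑ j : Fin (n + 1), (((j : ℕ) : ℝ) + 1) * ∑ d ∈ q.divisorsAntidiagonal,
      typeCoeff j (d.1 - 1) * typeCoeff (n - j) d.2) / (n + 1)

lemma typeCoeff_succ (n q : ℕ) : ((n : ℝ) + 1) * typeCoeff (n + 1) q =
    ∑ j ∈ Finset.range (n + 1), ((j : ℝ) + 1) * ∑ d ∈ q.divisorsAntidiagonal,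
      typeCoeff j (d.1 - 1) * typeCoeff (n - j) d.2 := by
  rw [typeCoeff, mul_div_cancel₀ _ (by positivity), Finset.sum_range]

lemma typeCoeff_nonneg (n q : ℕ) : 0 ≤ typeCoeff n q := by
  induction n using Nat.strong_induction_on generalizing q with
  | _ n ih =>
    cases n with
    | zero => rw [typeCoeff]; split_ifs <;> norm_num
    | succ n =>
      rw [typeCoeff]
      refine div_nonneg (Finset.sum_nonneg fun j _ => mul_nonneg (by positivity)
        (Finset.sum_nonneg fun d _ => mul_nonneg (ih _ (by omega) _) (ih _ (by omega) _)))
        (by positivity)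

lemma typeCoeff_zero_right (n : ℕ) : typeCoeff n 0 = 0 := by
  cases n with
  | zero => simp [typeCoeff]
  | succ n => simp [typeCoeff]

lemma forests_empty : forests (∅ : Finset V) = {fun _ => none} := by
  ext p
  rw [mem_forests, Finset.mem_singleton]
  constructor
  · intro h
    funext v
    cases hv : p v with
    | none => rfl
    | some w => simpa using h.2 v w hv
  · rintro rfl
    exact ⟨⟨fun _ => 0, by simp⟩, by simp⟩

lemma sum_forests_empty (F : ℕ → ℝ) :
    ∑ p ∈ forests (∅ : Finset V), F (closedSets p ∅).card = F 1 := by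
  rw [forests_empty, Finset.sum_singleton]
  congr 1
  rw [Finset.card_eq_one]
  refine ⟨∅, ?_⟩
  ext D
  simp [mem_closedSets]

/-- The number of forests on `S` with exactly `q` closed sets is at most `n!` times the coefficient
defined by the recursion. -/
lemma count_type_le (q : ℕ) (S : Finset V) :
    ∑ p ∈ forests S, (if (closedSets p S).card = q then (1 : ℝ) else 0) ≤
      (S.card ! : ℝ) * typeCoeff S.card q := by
  induction h : S.card using Nat.strong_induction_on generalizing S q with
  | _ n ih =>
    cases n with
    | zero =>
      rw [Finset.card_eq_zero] at h
      subst h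
      rw [sum_forests_empty (fun k => if k = q then (1 : ℝ) else 0), typeCoeff]
      simp [eq_comm]
    | succ n =>
      have := sum_forests_rec (V := V) q.divisorsAntidiagonal
        (fun k => if k = q then (1 : ℝ) else 0)
        (fun d k => if k = d.1 - 1 then (1 : ℝ) else 0)
        (fun d k => if k = d.2 then (1 : ℝ) else 0)
        (fun d j => typeCoeff j (d.1 - 1)) (fun d j => typeCoeff j d.2) n
        (fun k => by split_ifs <;> norm_num) (fun _ k => by split_ifs <;> norm_num)
        (fun _ k => by split_ifs <;> norm_num) ?_
        (fun d _ T hT => ih T.card (by omega) _ T rfl)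
        (fun d _ T hT => ih T.card (by omega) _ T rfl) S h
      · refine this.trans (le_of_eq ?_)
        rw [← typeCoeff_succ, Nat.factorial_succ]
        push_cast
        ring
      · intro a b ha hb
        have hnn : ∀ d ∈ q.divisorsAntidiagonal, (0 : ℝ) ≤
            (if a = d.1 - 1 then (1 : ℝ) else 0) * (if b = d.2 then (1 : ℝ) else 0) := by
          intro d _
          split_ifs <;> norm_num
        by_cases hq : (1 + a) * b = q
        · rw [if_pos hq]
          refine le_trans ?_ (Finset.single_le_sum hnn (a := (1 + a, b)) ?_)
          · simp
          · rw [Nat.mem_divisorsAntidiagonal]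
            exact ⟨hq, by rw [← hq]; positivity⟩
        · rw [if_neg hq]
          exact Finset.sum_nonneg hnn

/-- Coefficients (divided by `n!`) bounding the sum of `Q ^ s` over rooted forests on `n`
labelled vertices, `Q` being the number of closed sets, when `(1 + Q) ^ s` is at most
`h * Q ^ s`, plus `δ q` in case `Q = q ≤ M`. -/
noncomputable def powCoeff (h : ℝ) (δ : ℕ → ℝ) (M : ℕ) : ℕ → ℝ
  | 0 => 1
  | n + 1 => (∑ j : Fin (n + 1), (((j : ℕ) : ℝ) + 1) *
      ((h * powCoeff h δ M j + ∑ q ∈ Finset.Icc 1 M, δ q * typeCoeff j q) *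
        powCoeff h δ M (n - j))) / (n + 1)

lemma powCoeff_succ (h : ℝ) (δ : ℕ → ℝ) (M n : ℕ) :
    ((n : ℝ) + 1) * powCoeff h δ M (n + 1) =
      ∑ j ∈ Finset.range (n + 1), ((j : ℝ) + 1) *
      ((h * powCoeff h δ M j + ∑ q ∈ Finset.Icc 1 M, δ q * typeCoeff j q) *
        powCoeff h δ M (n - j)) := by
  rw [powCoeff, mul_div_cancel₀ _ (by positivity), Finset.sum_range]

lemma powCoeff_nonneg {h : ℝ} (hh : 0 ≤ h) {δ : ℕ → ℝ} (hδ : ∀ q, 0 ≤ δ q) (M n : ℕ) :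
    0 ≤ powCoeff h δ M n := by
  induction n using Nat.strong_induction_on with
  | _ n ih =>
    cases n with
    | zero => rw [powCoeff]; norm_num
    | succ n =>
      rw [powCoeff]
      refine div_nonneg (Finset.sum_nonneg fun j _ => mul_nonneg (by positivity)
        (mul_nonneg (add_nonneg (mul_nonneg hh (ih _ (by omega)))
          (Finset.sum_nonneg fun q _ => mul_nonneg (hδ q) (typeCoeff_nonneg _ _)))
          (ih _ (by omega)))) (by positivity)

/-- The moment bound: if `(1 + a) ^ s` is dominated as in the hypothesis `hs`, then the `s`-th moment
of the number of closed sets over forests on `S` is dominated by `powCoeff`. -/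
lemma sum_rpow_le {s h : ℝ} (hh : 0 ≤ h) {δ : ℕ → ℝ} (hδ : ∀ q, 0 ≤ δ q) (M : ℕ)
    (hs : ∀ a : ℕ, 1 ≤ a → (1 + (a : ℝ)) ^ s ≤ h * (a : ℝ) ^ s +
      ∑ q ∈ Finset.Icc 1 M, δ q * (if a = q then (1 : ℝ) else 0)) (S : Finset V) :
    ∑ p ∈ forests S, ((closedSets p S).card : ℝ) ^ s ≤
      (S.card ! : ℝ) * powCoeff h δ M S.card := by
  induction hS : S.card using Nat.strong_induction_on generalizing S with
  | _ n ih =>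
    cases n with
    | zero =>
      rw [Finset.card_eq_zero] at hS
      subst hS
      rw [sum_forests_empty (fun k => (k : ℝ) ^ s), powCoeff]
      simp
    | succ n =>
      have hX : ∀ a : ℕ, (0 : ℝ) ≤ h * (a : ℝ) ^ s +
          ∑ q ∈ Finset.Icc 1 M, δ q * (if a = q then (1 : ℝ) else 0) := fun a =>
        add_nonneg (mul_nonneg hh (by positivity)) (Finset.sum_nonneg fun q _ =>
          mul_nonneg (hδ q) (by split_ifs <;> norm_num))
      have := sum_forests_rec (V := V) (Finset.univ : Finset Unit)
        (fun k => (k : ℝ) ^ s)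
        (fun _ a => h * (a : ℝ) ^ s +
          ∑ q ∈ Finset.Icc 1 M, δ q * (if a = q then (1 : ℝ) else 0))
        (fun _ k => (k : ℝ) ^ s)
        (fun _ j => h * powCoeff h δ M j + ∑ q ∈ Finset.Icc 1 M, δ q * typeCoeff j q)
        (fun _ j => powCoeff h δ M j) n
        (fun k => by positivity) (fun _ a => hX a) (fun _ k => by positivity) ?_ ?_
        (fun _ _ T hT => ih T.card (by omega) T rfl) S hS
      · refine this.trans (le_of_eq ?_)
        simp only [Finset.univ_unique, Finset.sum_singleton]
        rw [← powCoeff_succ, Nat.factorial_succ]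
        push_cast
        ring
      · intro a b ha hb
        simp only [Finset.univ_unique, Finset.sum_singleton]
        push_cast
        rw [Real.mul_rpow (by positivity) (by positivity)]
        exact mul_le_mul_of_nonneg_right (hs a ha) (by positivity)
      · intro _ _ T hT
        rw [Finset.sum_add_distrib, ← Finset.mul_sum, Finset.sum_comm, mul_add]
        refine add_le_add ?_ ?_
        · have := mul_le_mul_of_nonneg_left (ih T.card (by omega) T rfl) hh
          linarith
        · rw [Finset.mul_sum]
          refine Finset.sum_le_sum fun q _ => ?_
          rw [← Finset.mul_sum]
          have := mul_le_mul_of_nonneg_left (count_type_le q T) (hδ q)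
          linarith

end Counting

/-! ### Generating functions -/

section Series

lemma sum_cauchy_le (u v : ℕ → ℝ) (hu : ∀ i, 0 ≤ u i) (hv : ∀ i, 0 ≤ v i) (N : ℕ) :
    ∑ n ∈ Finset.range N, ∑ j ∈ Finset.range (n + 1), u j * v (n - j) ≤
      (∑ j ∈ Finset.range N, u j) * ∑ l ∈ Finset.range N, v l := by
  rw [Finset.sum_range_diag_flip N (fun j l => u j * v l), Finset.sum_mul]
  refine Finset.sum_le_sum fun j _ => ?_
  rw [← Finset.mul_sum]
  refine mul_le_mul_of_nonneg_left ?_ (hu j)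
  exact Finset.sum_le_sum_of_subset_of_nonneg (Finset.range_mono (Nat.sub_le _ _))
    fun l _ _ => hv l

/-- Partial sums of the power series `β = exp (∑ αⱼ x ^ (j + 1))`, given through its differential
equation, are at most the exponential of the partial sums in the exponent. -/
lemma sum_le_exp (α β : ℕ → ℝ) (hα : ∀ j, 0 ≤ α j) (hβ : ∀ j, 0 ≤ β j) (h0 : β 0 = 1)
    (hrec : ∀ n : ℕ, ((n : ℝ) + 1) * β (n + 1) =
      ∑ j ∈ Finset.range (n + 1), ((j : ℝ) + 1) * (α j * β (n - j)))
    (N : ℕ) {x : ℝ} (hx : 0 ≤ x) :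
    ∑ n ∈ Finset.range (N + 1), β n * x ^ n ≤
      Real.exp (∑ j ∈ Finset.range N, α j * x ^ (j + 1)) := by
  set f : ℝ → ℝ := fun y => ∑ n ∈ Finset.range (N + 1), β n * y ^ n with hf
  set g : ℝ → ℝ := fun y => ∑ j ∈ Finset.range N, α j * y ^ (j + 1) with hg
  have hf' : ∀ y, HasDerivAt f (∑ n ∈ Finset.range N, ((n : ℝ) + 1) * β (n + 1) * y ^ n) y := by
    intro y
    have : HasDerivAt f (∑ n ∈ Finset.range (N + 1), β n * ((n : ℝ) * y ^ (n - 1))) y :=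
      HasDerivAt.fun_sum fun n _ => (hasDerivAt_pow n y).const_mul (β n)
    convert this using 1
    rw [Finset.sum_range_succ']
    simp only [Nat.cast_zero, zero_mul, mul_zero, add_zero, Nat.add_sub_cancel]
    refine Finset.sum_congr rfl fun n _ => ?_
    push_cast
    ring
  have hg' : ∀ y, HasDerivAt g (∑ j ∈ Finset.range N, ((j : ℝ) + 1) * α j * y ^ j) y := by
    intro y
    have : HasDerivAt g (∑ j ∈ Finset.range N, α j * (((j + 1 : ℕ) : ℝ) * y ^ (j + 1 - 1))) y :=
      HasDerivAt.fun_sum fun j _ => (hasDerivAt_pow (j + 1) y).const_mul (α j)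
    convert this using 1
    refine Finset.sum_congr rfl fun n _ => ?_
    push_cast
    ring
  have hle : ∀ y, 0 ≤ y → (∑ n ∈ Finset.range N, ((n : ℝ) + 1) * β (n + 1) * y ^ n) ≤
      (∑ j ∈ Finset.range N, ((j : ℝ) + 1) * α j * y ^ j) * f y := by
    intro y hy
    have h1 := sum_cauchy_le (fun j => ((j : ℝ) + 1) * α j * y ^ j) (fun l => β l * y ^ l)
      (fun j => mul_nonneg (mul_nonneg (by positivity) (hα j)) (by positivity))
      (fun l => mul_nonneg (hβ l) (by positivity)) N
    have h2 : ∑ l ∈ Finset.range N, β l * y ^ l ≤ f y := by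
      rw [hf]
      exact Finset.sum_le_sum_of_subset_of_nonneg (Finset.range_mono (Nat.le_succ N))
        fun l _ _ => mul_nonneg (hβ l) (by positivity)
    refine le_trans (le_of_eq ?_) (h1.trans (mul_le_mul_of_nonneg_left h2
      (Finset.sum_nonneg fun j _ =>
        mul_nonneg (mul_nonneg (by positivity) (hα j)) (by positivity))))
    refine Finset.sum_congr rfl fun n _ => ?_
    rw [hrec, Finset.sum_mul]
    refine Finset.sum_congr rfl fun j hj => ?_
    have hj' : j ≤ n := by simpa [Nat.lt_succ_iff] using hj
    have : y ^ n = y ^ j * y ^ (n - j) := by rw [← pow_add, Nat.add_sub_cancel' hj']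
    rw [this]
    ring
  have hF : ∀ y, HasDerivAt (fun y => f y * Real.exp (-g y))
      ((∑ n ∈ Finset.range N, ((n : ℝ) + 1) * β (n + 1) * y ^ n) * Real.exp (-g y) +
        f y * (Real.exp (-g y) * -(∑ j ∈ Finset.range N, ((j : ℝ) + 1) * α j * y ^ j))) y :=
    fun y => (hf' y).mul ((hg' y).neg.exp)
  have hanti : AntitoneOn (fun y => f y * Real.exp (-g y)) (Set.Ici 0) := by
    refine antitoneOn_of_deriv_nonpos (convex_Ici 0)
      (fun y _ => (hF y).continuousAt.continuousWithinAt)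
      (fun y _ => (hF y).differentiableAt.differentiableWithinAt) fun y hy => ?_
    rw [interior_Ici] at hy
    rw [(hF y).deriv]
    have := mul_le_mul_of_nonneg_right (hle y (le_of_lt hy)) (Real.exp_pos (-g y)).le
    linarith
  have := hanti (Set.mem_Ici.2 le_rfl) (Set.mem_Ici.2 hx) hx
  have hf0 : f 0 = 1 := by
    simp only [hf]
    rw [Finset.sum_range_succ']
    simp [h0]
  have hg0 : g 0 = 0 := by simp [hg]
  simp only [hf0, hg0, neg_zero, Real.exp_zero, mul_one] at this
  rw [Real.exp_neg, ← div_eq_mul_inv, div_le_one (Real.exp_pos _)] at this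
  exact this

end Series

/-! ### The generating functions of forests with a given number of closed sets -/

section Types

open PowerSeries ArithmeticFunction

/-- Formal Dirichlet series, over power series in `x`, of rooted forests by number of closed
sets. -/
noncomputable def forestSeries : ArithmeticFunction ℝ⟦X⟧ :=
  ⟨fun q => PowerSeries.mk fun n => typeCoeff n q, by ext n; simp [typeCoeff_zero_right]⟩

/-- Formal Dirichlet series, over power series in `x`, of rooted trees by number of closed
sets. -/
noncomputable def treeSeries : ArithmeticFunction ℝ⟦X⟧ :=
  ⟨fun q => PowerSeries.X * forestSeries (q - 1), by simp⟩

/-- Coefficientwise differentiation with respect to `x`. -/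
noncomputable def diffX (f : ArithmeticFunction ℝ⟦X⟧) : ArithmeticFunction ℝ⟦X⟧ :=
  ⟨fun q => PowerSeries.derivative ℝ (f q), by simp⟩

/-- The derivation of the Dirichlet ring multiplying the `q`-th coefficient by the number of
prime factors of `q`. -/
noncomputable def diffΩ (f : ArithmeticFunction ℝ⟦X⟧) : ArithmeticFunction ℝ⟦X⟧ :=
  ⟨fun q => (cardFactors q : ℝ⟦X⟧) * f q, by simp⟩

lemma diffX_apply (f : ArithmeticFunction ℝ⟦X⟧) (q : ℕ) :
    diffX f q = PowerSeries.derivative ℝ (f q) := rfl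

lemma diffΩ_apply (f : ArithmeticFunction ℝ⟦X⟧) (q : ℕ) :
    diffΩ f q = (cardFactors q : ℝ⟦X⟧) * f q := rfl

lemma forestSeries_apply (q : ℕ) :
    forestSeries q = PowerSeries.mk fun n => typeCoeff n q := rfl

lemma treeSeries_apply (q : ℕ) :
    treeSeries q = PowerSeries.X * forestSeries (q - 1) := rfl

lemma diffX_mul (f g : ArithmeticFunction ℝ⟦X⟧) :
    diffX (f * g) = diffX f * g + f * diffX g := by
  ext1 q
  simp only [diffX_apply, ArithmeticFunction.add_apply, ArithmeticFunction.mul_apply, map_sum,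
    ← Finset.sum_add_distrib]
  refine Finset.sum_congr rfl fun d _ => ?_
  rw [Derivation.leibniz]
  simp only [smul_eq_mul]
  ring

lemma diffΩ_mul (f g : ArithmeticFunction ℝ⟦X⟧) :
    diffΩ (f * g) = diffΩ f * g + f * diffΩ g := by
  ext1 q
  simp only [diffΩ_apply, ArithmeticFunction.add_apply, ArithmeticFunction.mul_apply,
    Finset.mul_sum, ← Finset.sum_add_distrib]
  refine Finset.sum_congr rfl fun d hd => ?_
  rw [Nat.mem_divisorsAntidiagonal] at hd
  have h1 : d.1 ≠ 0 := by rintro h; simp [h] at hd; exact hd.2 hd.1.symm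
  have h2 : d.2 ≠ 0 := by rintro h; simp [h] at hd; exact hd.2 hd.1.symm
  rw [← hd.1, cardFactors_mul h1 h2]
  push_cast
  ring

lemma diffX_diffΩ (f : ArithmeticFunction ℝ⟦X⟧) : diffX (diffΩ f) = diffΩ (diffX f) := by
  ext1 q
  simp only [diffX_apply, diffΩ_apply]
  rw [Derivation.leibniz]
  simp

lemma diffX_sub (f g : ArithmeticFunction ℝ⟦X⟧) : diffX (f - g) = diffX f - diffX g := by
  ext1 q
  simp [diffX_apply, sub_eq_add_neg]

lemma diffX_forestSeries : diffX forestSeries = diffX treeSeries * forestSeries := by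
  ext q n
  rw [diffX_apply, PowerSeries.coeff_derivative, forestSeries_apply, PowerSeries.coeff_mk,
    mul_comm, typeCoeff_succ, ArithmeticFunction.mul_apply, map_sum]
  simp_rw [PowerSeries.coeff_mul, Finset.mul_sum]
  rw [Finset.sum_comm]
  refine Finset.sum_congr rfl fun d _ => ?_
  rw [Finset.Nat.sum_antidiagonal_eq_sum_range_succ_mk]
  refine Finset.sum_congr rfl fun j _ => ?_
  rw [diffX_apply, PowerSeries.coeff_derivative, treeSeries_apply, PowerSeries.coeff_succ_X_mul,
    forestSeries_apply, forestSeries_apply, PowerSeries.coeff_mk, PowerSeries.coeff_mk]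
  ring

/-- Since the Dirichlet series of forests is the exponential of that of trees, every derivation
satisfies the chain rule; here for the derivation given by `Ω`. -/
lemma diffΩ_forestSeries : diffΩ forestSeries = diffΩ treeSeries * forestSeries := by
  set D := forestSeries
  set E := treeSeries
  set Z := diffΩ D - diffΩ E * D with hZ
  have h1 : diffX Z = diffX E * Z := by
    have e1 : diffX (diffΩ D) = diffΩ (diffX E) * D + diffX E * diffΩ D := by
      rw [diffX_diffΩ, diffX_forestSeries, diffΩ_mul]
    have e2 : diffX (diffΩ E * D) = diffΩ (diffX E) * D + diffΩ E * (diffX E * D) := by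
      rw [diffX_mul, diffX_diffΩ, diffX_forestSeries]
    rw [hZ, diffX_sub, e1, e2]
    ring
  have h2 : ∀ q, PowerSeries.constantCoeff (Z q) = 0 := by
    intro q
    have : Z q = diffΩ D q - (diffΩ E * D) q := by
      simp [hZ, sub_eq_add_neg]
    rw [this, map_sub, ArithmeticFunction.mul_apply, map_sum]
    have e1 : PowerSeries.constantCoeff (diffΩ D q) = 0 := by
      rw [diffΩ_apply, map_mul]
      by_cases hq : q = 1
      · simp [hq]
      · have : PowerSeries.constantCoeff (D q) = 0 := by
          change PowerSeries.constantCoeff (PowerSeries.mk fun n => typeCoeff n q) = 0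
          rw [← PowerSeries.coeff_zero_eq_constantCoeff_apply, PowerSeries.coeff_mk, typeCoeff,
            if_neg hq]
        rw [this, mul_zero]
    rw [e1, zero_sub, neg_eq_zero]
    refine Finset.sum_eq_zero fun d _ => ?_
    rw [diffΩ_apply]
    have : PowerSeries.constantCoeff (E d.1) = 0 := by
      change PowerSeries.constantCoeff (PowerSeries.X * D (d.1 - 1)) = 0
      simp
    rw [map_mul, map_mul, this, mul_zero, zero_mul]
  have h3 : ∀ q, Z q = 0 := by
    intro q
    induction q using Nat.strong_induction_on with
    | _ q ih =>
      refine PowerSeries.derivative.ext ?_ ?_ (R := ℝ)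
      · rw [← diffX_apply, h1, ArithmeticFunction.mul_apply, _root_.map_zero]
        refine Finset.sum_eq_zero fun d hd => ?_
        rw [Nat.mem_divisorsAntidiagonal] at hd
        by_cases hd1 : d.1 = 1
        · have : E d.1 = 0 := by
            change PowerSeries.X * D (d.1 - 1) = 0
            simp [hd1]
          rw [diffX_apply, this]
          simp
        · rw [ih d.2, mul_zero]
          have hq : 0 < q := Nat.pos_of_ne_zero hd.2
          rw [← hd.1] at hq ⊢
          have ha := Nat.pos_of_mul_pos_right hq
          have hb := Nat.pos_of_mul_pos_left hq
          nlinarith [show 2 ≤ d.1 by omega]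
      · rw [h2]
        simp
  have : Z = 0 := by ext1 q; rw [h3]; rfl
  exact sub_eq_zero.1 this

lemma cardFactors_mul_typeCoeff (n q : ℕ) : (cardFactors q : ℝ) * typeCoeff (n + 1) q =
    ∑ d ∈ q.divisorsAntidiagonal, (cardFactors d.1 : ℝ) *
      ∑ j ∈ Finset.range (n + 1), typeCoeff j (d.1 - 1) * typeCoeff (n - j) d.2 := by
  have h := congrArg (fun f : ArithmeticFunction ℝ⟦X⟧ => PowerSeries.coeff (n + 1) (f q))
    diffΩ_forestSeries
  simp only [diffΩ_apply, ArithmeticFunction.mul_apply, map_sum] at h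
  have hc : ∀ (k m : ℕ) (f : ℝ⟦X⟧), PowerSeries.coeff m ((k : ℝ⟦X⟧) * f) =
      k * PowerSeries.coeff m f := by
    intro k m f
    rw [← nsmul_eq_mul, map_nsmul, nsmul_eq_mul]
  rw [hc, forestSeries_apply, PowerSeries.coeff_mk] at h
  rw [h]
  refine Finset.sum_congr rfl fun d _ => ?_
  rw [mul_assoc, hc, treeSeries_apply, mul_assoc, PowerSeries.coeff_succ_X_mul,
    PowerSeries.coeff_mul, Finset.Nat.sum_antidiagonal_eq_sum_range_succ_mk]
  simp [forestSeries_apply]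

/-- Upper bounds for the generating functions of forests by number of closed sets, from a
supersolution `U` of the recursion given by the derivation `Ω`. -/
lemma sum_typeCoeff_le {x : ℝ} (hx : 0 ≤ x) (M : ℕ) (U : ℕ → ℝ) (hU : ∀ q, 0 ≤ U q)
    (hU1 : 1 ≤ U 1)
    (hrec : ∀ q, 2 ≤ q → q ≤ M → ∑ d ∈ q.divisorsAntidiagonal, (cardFactors d.1 : ℝ) *
      (x * U (d.1 - 1) * U d.2) ≤ cardFactors q * U q) (N q : ℕ) (hq : q ≤ M) :
    ∑ n ∈ Finset.range N, typeCoeff n q * x ^ n ≤ U q := by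
  have hnn : ∀ q n, 0 ≤ typeCoeff n q * x ^ n := fun q n =>
    mul_nonneg (typeCoeff_nonneg n q) (by positivity)
  induction q using Nat.strong_induction_on with
  | _ q ih =>
    rcases Nat.lt_or_ge q 2 with h2 | h2
    · interval_cases q
      · simp [typeCoeff_zero_right, hU]
      · -- only the empty forest has a single closed set
        have : ∀ n, typeCoeff (n + 1) 1 = 0 := by
          intro n
          rw [typeCoeff]
          simp [typeCoeff_zero_right]
        cases N with
        | zero => simpa using hU 1
        | succ N =>
          rw [Finset.sum_range_succ']
          simpa [this, typeCoeff] using hU1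
    · have hΩ : 0 < (cardFactors q : ℝ) := by
        have := cardFactors_pos_iff_one_lt.2 (show 1 < q by omega)
        exact_mod_cast this
      rw [← mul_le_mul_iff_right₀ hΩ]
      refine le_trans ?_ (hrec q h2 hq)
      have hz : typeCoeff 0 q = 0 := by rw [typeCoeff, if_neg (by omega)]
      have h1 : (cardFactors q : ℝ) * ∑ n ∈ Finset.range N, typeCoeff n q * x ^ n ≤
          (cardFactors q : ℝ) * ∑ n ∈ Finset.range N, typeCoeff (n + 1) q * x ^ (n + 1) := by
        refine mul_le_mul_of_nonneg_left ?_ hΩ.le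
        have e1 := Finset.sum_range_succ' (fun n => typeCoeff n q * x ^ n) N
        have e2 := Finset.sum_range_succ (fun n => typeCoeff n q * x ^ n) N
        have := hnn q N
        simp only [hz, zero_mul, add_zero] at e1
        linarith
      refine h1.trans ?_
      have h3 : (cardFactors q : ℝ) * ∑ n ∈ Finset.range N, typeCoeff (n + 1) q * x ^ (n + 1) =
          ∑ d ∈ q.divisorsAntidiagonal, (cardFactors d.1 : ℝ) * (x *
            ∑ n ∈ Finset.range N, ∑ j ∈ Finset.range (n + 1),
              (typeCoeff j (d.1 - 1) * x ^ j) * (typeCoeff (n - j) d.2 * x ^ (n - j))) := by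
        simp_rw [Finset.mul_sum, ← mul_assoc, cardFactors_mul_typeCoeff]
        simp_rw [Finset.mul_sum, Finset.sum_mul]
        rw [Finset.sum_comm]
        refine Finset.sum_congr rfl fun d _ => Finset.sum_congr rfl fun n _ =>
          Finset.sum_congr rfl fun j hj => ?_
        have hj' : j ≤ n := by simpa [Nat.lt_succ_iff] using hj
        have : x ^ (n + 1) = x * (x ^ j * x ^ (n - j)) := by
          rw [← pow_add, Nat.add_sub_cancel' hj', pow_succ, mul_comm]
        rw [this]
        ring
      rw [h3]
      refine Finset.sum_le_sum fun d hd => ?_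
      rw [Nat.mem_divisorsAntidiagonal] at hd
      refine mul_le_mul_of_nonneg_left ?_ (Nat.cast_nonneg _)
      rw [mul_assoc]
      refine mul_le_mul_of_nonneg_left ?_ hx
      have hq0 : 0 < d.1 * d.2 := by omega
      have ha := Nat.pos_of_mul_pos_right hq0
      have hb := Nat.pos_of_mul_pos_left hq0
      have hd1 : d.1 - 1 < q := by
        have : d.1 ≤ q := by nlinarith
        omega
      refine (sum_cauchy_le _ _ (hnn (d.1 - 1)) (hnn d.2) N).trans ?_
      by_cases h1 : d.1 = 1
      · have : ∑ n ∈ Finset.range N, typeCoeff n (d.1 - 1) * x ^ n = 0 := by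
          simp [h1, typeCoeff_zero_right]
        rw [this, zero_mul]
        exact mul_nonneg (hU _) (hU _)
      · have hd2 : d.2 < q := by nlinarith [show 2 ≤ d.1 by omega]
        exact mul_le_mul (ih _ hd1 (by omega)) (ih _ hd2 (by omega))
          (Finset.sum_nonneg fun n _ => hnn _ n) (hU _)

end Types

/-! ### Labelled trees as rooted forests -/

section Trees

variable {V : Type*} [Fintype V] [DecidableEq V]

lemma anc_rank {p : V → Option V} {f : V → ℕ} (hf : ∀ v w, p v = some w → f w < f v) {v w : V}
    (h : Anc p v w) : v = w ∨ f w < f v := by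
  induction h with
  | refl => exact Or.inl rfl
  | tail _ h2 ih =>
    right
    have := hf _ _ h2
    rcases ih with rfl | ih
    · exact this
    · exact this.trans ih

lemma anc_antisymm {p : V → Option V} (hp : IsForest p) {v w : V} (h1 : Anc p v w)
    (h2 : Anc p w v) : v = w := by
  obtain ⟨f, hf⟩ := hp
  rcases anc_rank hf h1 with h | h
  · exact h
  · rcases anc_rank hf h2 with h' | h'
    · exact h'.symm
    · omega

/-- A tree is the graph of a parent function: orient every edge towards a chosen vertex. -/
lemma exists_parent [Nonempty V] {G : SimpleGraph V} (hG : G.IsTree) :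
    ∃ p ∈ forests (Finset.univ : Finset V),
      ∀ v w, G.Adj v w ↔ p v = some w ∨ p w = some v := by
  classical
  obtain ⟨r⟩ := ‹Nonempty V›
  have hc : G.Connected := hG.1
  have hex : ∀ v, v ≠ r → ∃ w, G.Adj v w ∧ G.dist w r < G.dist v r := by
    intro v hv
    obtain ⟨c, hcl⟩ := hc.exists_walk_length_eq_dist v r
    cases c with
    | nil => exact absurd rfl hv
    | cons h q =>
      refine ⟨_, h, ?_⟩
      rw [← hcl, SimpleGraph.Walk.length_cons]
      exact Nat.lt_succ_of_le (SimpleGraph.dist_le q)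
  choose! par hadj hlt using hex
  let p : V → Option V := fun v => if v = r then none else some (par v)
  have hp : ∀ v w, p v = some w → v ≠ r ∧ w = par v := by
    intro v w h
    by_cases hv : v = r
    · simp [p, hv] at h
    · simp only [p, hv, if_false, Option.some.injEq] at h
      exact ⟨hv, h.symm⟩
  refine ⟨p, mem_forests.2 ⟨⟨fun v => G.dist v r, ?_⟩, by simp⟩, ?_⟩
  · intro v w h
    obtain ⟨h1, rfl⟩ := hp v w h
    exact hlt v h1
  have hinj : Set.InjOn (fun v => s(v, par v)) ((Finset.univ.erase r : Finset V) : Set V) := by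
    intro v hv w hw h
    have hv' : v ≠ r := by simpa using hv
    have hw' : w ≠ r := by simpa using hw
    rcases Sym2.eq_iff.1 h with h | h
    · exact h.1
    · have h1 := hlt v hv'
      have h2 := hlt w hw'
      rw [h.2] at h1
      rw [← h.1] at h2
      omega
  have himg : (Finset.univ.erase r).image (fun v => s(v, par v)) = G.edgeFinset := by
    refine Finset.eq_of_subset_of_card_le ?_ ?_
    · intro e he
      obtain ⟨v, hv, rfl⟩ := Finset.mem_image.1 he
      rw [SimpleGraph.mem_edgeFinset, SimpleGraph.mem_edgeSet]
      exact hadj v (by simpa using hv)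
    · rw [Finset.card_image_of_injOn hinj, Finset.card_erase_of_mem (Finset.mem_univ r),
        Finset.card_univ]
      have := hG.card_edgeFinset
      omega
  intro v w
  constructor
  · intro h
    have : s(v, w) ∈ G.edgeFinset := by simpa using h
    rw [← himg] at this
    obtain ⟨u, hu, huv⟩ := Finset.mem_image.1 this
    have hu' : u ≠ r := by simpa using hu
    rcases Sym2.eq_iff.1 huv with ⟨rfl, rfl⟩ | ⟨rfl, rfl⟩
    · left; simp [p, hu']
    · right; simp [p, hu']
  · rintro (h | h)
    · obtain ⟨h1, rfl⟩ := hp v w h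
      exact hadj v h1
    · obtain ⟨h1, rfl⟩ := hp w v h
      exact (hadj w h1).symm

lemma connected_induct {G : SimpleGraph V} {S : Set V} (hS : (G.induce S).Connected)
    {P : V → Prop} {a : V} (ha : a ∈ S) (hPa : P a)
    (hstep : ∀ x ∈ S, ∀ y ∈ S, G.Adj x y → P x → P y) : ∀ b ∈ S, P b := by
  intro b hb
  have h := hS.preconnected ⟨a, ha⟩ ⟨b, hb⟩
  rw [SimpleGraph.reachable_iff_reflTransGen] at h
  suffices ∀ c : S, Relation.ReflTransGen (G.induce S).Adj ⟨a, ha⟩ c → P c from this _ h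
  intro c hc
  induction hc with
  | refl => exact hPa
  | tail _ h2 ih => exact hstep _ (Subtype.prop _) _ (Subtype.prop _) h2 ih

/-- A subtree is determined by its top vertex and the closed set that it generates. -/
lemma card_subtrees_le {G : SimpleGraph V} {p : V → Option V} (hp : IsForest p)
    (hG : ∀ v w, G.Adj v w ↔ p v = some w ∨ p w = some v) :
    Nat.card {S : Set V // (G.induce S).Connected} ≤
      Fintype.card V * (closedSets p Finset.univ).card := by
  classical
  have htop : ∀ S : {S : Set V // (G.induce S).Connected},
      ∃ v ∈ S.1, ∀ u ∈ S.1, Anc p u v := by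
    rintro ⟨S, hS⟩
    obtain ⟨f, hf⟩ := hp
    obtain ⟨⟨a, ha⟩⟩ := hS.nonempty
    have hex : ∃ k, ∃ v ∈ S, f v = k := ⟨f a, a, ha, rfl⟩
    obtain ⟨v, hv, hvk⟩ := Nat.find_spec hex
    have hmin : ∀ u ∈ S, f v ≤ f u := fun u hu => by
      rw [hvk]
      exact Nat.find_min' hex ⟨u, hu, rfl⟩
    refine ⟨v, hv, connected_induct hS hv Relation.ReflTransGen.refl ?_⟩
    intro x hx y hy hxy hxv
    rcases (hG x y).1 hxy with h | h
    · by_cases hxv' : x = v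
      · have h1 := hf x y h
        have h2 := hmin y hy
        rw [hxv'] at h1
        omega
      · exact (anc_of_parent h hxv').1 hxv
    · exact Relation.ReflTransGen.head h hxv
  choose top htop1 htop2 using htop
  let clo : Set V → Finset V := fun S => Finset.univ.filter fun w => ∃ u ∈ S, Anc p u w
  have hclo : ∀ S, clo S ∈ closedSets p Finset.univ := by
    intro S
    rw [mem_closedSets]
    refine ⟨Finset.subset_univ _, fun v hv w hw => ?_⟩
    simp only [clo, Finset.mem_filter, Finset.mem_univ, true_and] at hv ⊢
    obtain ⟨u, hu, huv⟩ := hv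
    exact ⟨u, hu, Relation.ReflTransGen.tail huv hw⟩
  have hrec : ∀ S : {S : Set V // (G.induce S).Connected},
      S.1 = {w | w ∈ clo S.1 ∧ Anc p w (top S)} := by
    intro S
    ext w
    simp only [clo, Finset.mem_filter, Finset.mem_univ, true_and, Set.mem_ofPred_eq]
    constructor
    · exact fun hw => ⟨⟨w, hw, Relation.ReflTransGen.refl⟩, htop2 S w hw⟩
    · rintro ⟨⟨u, hu, huw⟩, hw⟩
      by_contra hwS
      -- a connected set avoiding `w` and meeting the part below `w` lies entirely below `w`
      have : ∀ b ∈ S.1, Anc p b w := by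
        refine connected_induct S.2 hu huw ?_
        intro x hx y hy hxy hxw
        rcases (hG x y).1 hxy with h | h
        · exact (anc_of_parent h (fun h' : x = w => hwS (h' ▸ hx))).1 hxw
        · exact Relation.ReflTransGen.head h hxw
      have := anc_antisymm hp (this _ (htop1 S)) hw
      exact hwS (this ▸ htop1 S)
  have hinj : Function.Injective (fun S : {S : Set V // (G.induce S).Connected} =>
      ((top S, ⟨clo S.1, hclo S.1⟩) : V × {D // D ∈ closedSets p Finset.univ})) := by
    intro S T h
    simp only [Prod.mk.injEq, Subtype.mk.injEq] at h
    apply Subtype.ext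
    rw [hrec S, hrec T, h.1, h.2]
  refine (Nat.card_le_card_of_injective _ hinj).trans (le_of_eq ?_)
  rw [Nat.card_prod, Nat.card_eq_fintype_card, Nat.card_eq_fintype_card, Fintype.card_coe]

end Trees

/-! ### A lower bound for the number of labelled trees -/

section LowerBound

variable {V : Type*} [Fintype V] [DecidableEq V]

open scoped Classical in
/-- The rooted forests on `V` with `k` edges. -/
noncomputable def edgeForests (V : Type*) [Fintype V] [DecidableEq V] (k : ℕ) :
    Finset (V → Option V) :=
  Finset.univ.filter fun p => IsForest p ∧ (Finset.univ.filter fun v => p v ≠ none).card = k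

lemma mem_edgeForests {k : ℕ} {p : V → Option V} : p ∈ edgeForests V k ↔
    IsForest p ∧ (Finset.univ.filter fun v => p v ≠ none).card = k := by
  simp only [edgeForests, Finset.mem_filter, Finset.mem_univ, true_and]

lemma root_unique {p : V → Option V} {u v w : V} (h1 : Anc p u v) (h2 : Anc p u w)
    (hv : p v = none) (hw : p w = none) : v = w := by
  induction h1 using Relation.ReflTransGen.head_induction_on with
  | refl =>
    rcases Relation.ReflTransGen.cases_head h2 with h | ⟨c, hc, _⟩
    · exact h
    · simp [hv] at hc
  | head h _ ih =>
    refine ih ((anc_of_parent h ?_).1 h2)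
    rintro rfl
    simp [hw] at h

lemma isForest_update {p : V → Option V} (hp : IsForest p) {u v : V} (hv : p v = none)
    (huv : ¬ Anc p u v) : IsForest (Function.update p v (some u)) := by
  classical
  obtain ⟨f, hf⟩ := hp
  refine ⟨fun w => f w + if Anc p w v then f u + 1 else 0, fun w z h => ?_⟩
  by_cases hw : w = v
  · subst hw
    simp only [Function.update_self, Option.some.injEq] at h
    subst h
    have : Anc p w w := Relation.ReflTransGen.refl
    simp only [huv, this, if_true, if_false]
    omega
  · rw [Function.update_of_ne hw] at h
    have h1 := hf w z h
    simp only [anc_of_parent h hw]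
    omega

/-- Double counting of the pairs consisting of a rooted forest with `k + 1` edges and one of its
edges: each arises by choosing a forest with `k` edges, any vertex `u`, and any root of another
tree that is made a child of `u`. -/
lemma card_edgeForests_succ (k : ℕ) :
    (edgeForests V k).card * (Fintype.card V * (Fintype.card V - 1 - k)) ≤
      (edgeForests V (k + 1)).card * (k + 1) := by
  classical
  set n := Fintype.card V
  let A : (V → Option V) → Finset (V × V) := fun p =>
    Finset.univ.filter fun x => p x.2 = none ∧ ¬ Anc p x.1 x.2
  let B : (V → Option V) → Finset V := fun p => Finset.univ.filter fun v => p v ≠ none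
  have hA : ∀ p ∈ edgeForests V k, n * (n - 1 - k) ≤ (A p).card := by
    intro p hp
    obtain ⟨hpf, hpk⟩ := mem_edgeForests.1 hp
    have hroots : (Finset.univ.filter fun v => p v = none).card = n - k := by
      have := Finset.card_filter_add_card_filter_not (s := (Finset.univ : Finset V))
        (fun v => p v = none)
      rw [Finset.card_univ] at this
      simp only [ne_eq] at hpk
      omega
    have hfib : ∀ u : V, n - 1 - k ≤
        (Finset.univ.filter fun v => p v = none ∧ ¬ Anc p u v).card := by
      intro u
      obtain ⟨r, hr1, hr2⟩ := exists_root hpf u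
      have : (Finset.univ.filter fun v => p v = none).erase r ⊆
          Finset.univ.filter fun v => p v = none ∧ ¬ Anc p u v := by
        intro v hv
        simp only [Finset.mem_erase, Finset.mem_filter, Finset.mem_univ, true_and] at hv ⊢
        exact ⟨hv.2, fun h => hv.1 (root_unique h hr1 hv.2 hr2)⟩
      have h := Finset.card_le_card this
      rw [Finset.card_erase_of_mem (by simp [hr2]), hroots] at h
      omega
    have hsig : A p = (Finset.univ : Finset V).biUnion fun u =>
        (Finset.univ.filter fun v => p v = none ∧ ¬ Anc p u v).image (fun v => (u, v)) := by
      ext ⟨u, v⟩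
      simp [A]
    rw [hsig, Finset.card_biUnion]
    · calc n * (n - 1 - k) = ∑ _u : V, (n - 1 - k) := by simp [n]
        _ ≤ _ := by
          refine Finset.sum_le_sum fun u _ => ?_
          rw [Finset.card_image_of_injective _ (Prod.mk_right_injective u)]
          exact hfib u
    · intro u _ u' _ hne
      rw [Function.onFun, Finset.disjoint_left]
      intro x hx hx'
      simp only [Finset.mem_image] at hx hx'
      obtain ⟨_, _, rfl⟩ := hx
      obtain ⟨_, _, h⟩ := hx'
      exact hne (Prod.mk.inj h).1.symm
  have hle : ((edgeForests V k).sigma A).card ≤ ((edgeForests V (k + 1)).sigma B).card := by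
    refine Finset.card_le_card_of_injOn
      (fun x => ⟨Function.update x.1 x.2.2 (some x.2.1), x.2.2⟩) ?_ ?_
    · rintro ⟨p, u, v⟩ hx
      simp only [Finset.mem_coe, Finset.mem_sigma, A, B, Finset.mem_filter, Finset.mem_univ,
        true_and] at hx ⊢
      obtain ⟨hp, hv, huv⟩ := hx
      obtain ⟨hpf, hpk⟩ := mem_edgeForests.1 hp
      refine ⟨mem_edgeForests.2 ⟨isForest_update hpf hv huv, ?_⟩, by simp⟩
      have : (Finset.univ.filter fun w => Function.update p v (some u) w ≠ none) =
          insert v (Finset.univ.filter fun w => p w ≠ none) := by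
        ext w
        by_cases hw : w = v
        · subst hw; simp
        · simp [hw]
      rw [this, Finset.card_insert_of_notMem (by simp [hv]), hpk]
    · rintro ⟨p, u, v⟩ hx ⟨p', u', v'⟩ hx' h
      simp only [Finset.mem_coe, Finset.mem_sigma, A, Finset.mem_filter, Finset.mem_univ,
        true_and] at hx hx'
      simp only [Sigma.mk.injEq, heq_eq_eq] at h
      obtain ⟨h1, rfl⟩ := h
      have hu : u = u' := by simpa using congrFun h1 v
      subst hu
      have hpp : p = p' := by
        funext w
        by_cases hw : w = v
        · subst hw; rw [hx.2.1, hx'.2.1]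
        · simpa [Function.update_of_ne hw] using congrFun h1 w
      subst hpp
      rfl
  rw [Finset.card_sigma, Finset.card_sigma] at hle
  calc (edgeForests V k).card * (n * (n - 1 - k))
      = ∑ _p ∈ edgeForests V k, n * (n - 1 - k) := by simp
    _ ≤ ∑ p ∈ edgeForests V k, (A p).card := Finset.sum_le_sum hA
    _ ≤ ∑ p ∈ edgeForests V (k + 1), (B p).card := hle
    _ = ∑ _p ∈ edgeForests V (k + 1), (k + 1) :=
        Finset.sum_congr rfl fun p hp => (mem_edgeForests.1 hp).2
    _ = _ := by simp

lemma card_edgeForests_ge (k : ℕ) :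
    Fintype.card V ^ k * (Fintype.card V - 1).descFactorial k ≤
      (edgeForests V k).card * k ! := by
  induction k with
  | zero =>
    simp only [pow_zero, Nat.descFactorial_zero, mul_one, Nat.factorial_zero]
    refine Finset.card_pos.2 ⟨fun _ => none, mem_edgeForests.2 ⟨⟨fun _ => 0, by simp⟩, by simp⟩⟩
  | succ k ih =>
    rw [pow_succ, Nat.descFactorial_succ, Nat.factorial_succ]
    calc _ = (Fintype.card V ^ k * (Fintype.card V - 1).descFactorial k) *
          (Fintype.card V * (Fintype.card V - 1 - k)) := by ring
      _ ≤ ((edgeForests V k).card * k !) * (Fintype.card V * (Fintype.card V - 1 - k)) :=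
          Nat.mul_le_mul_right _ ih
      _ = ((edgeForests V k).card * (Fintype.card V * (Fintype.card V - 1 - k))) * k ! := by ring
      _ ≤ ((edgeForests V (k + 1)).card * (k + 1)) * k ! :=
          Nat.mul_le_mul_right _ (card_edgeForests_succ k)
      _ = _ := by ring

/-- The graph whose edges join each vertex to its parent. -/
def parentGraph (p : V → Option V) : SimpleGraph V :=
  SimpleGraph.fromRel fun v w => p v = some w

lemma parentGraph_adj {p : V → Option V} (hp : IsForest p) {v w : V} :
    (parentGraph p).Adj v w ↔ p v = some w ∨ p w = some v := by
  obtain ⟨f, hf⟩ := hp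
  rw [parentGraph, SimpleGraph.fromRel_adj]
  refine ⟨fun h => h.2, fun h => ⟨?_, h⟩⟩
  rintro rfl
  rcases h with h | h <;> exact absurd (hf _ _ h) (lt_irrefl _)

lemma exists_unique_root {p : V → Option V} {n : ℕ} (hn : Fintype.card V = n + 1)
    (hp : p ∈ edgeForests V n) : ∃ r, p r = none ∧ ∀ v, p v = none → v = r := by
  have hpk := (mem_edgeForests.1 hp).2
  have := Finset.card_filter_add_card_filter_not (s := (Finset.univ : Finset V))
    (fun v => p v = none)
  rw [Finset.card_univ] at this
  simp only [ne_eq] at hpk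
  obtain ⟨r, hr⟩ := Finset.card_eq_one.1 (show (Finset.univ.filter fun v => p v = none).card = 1
    by omega)
  have hr' : ∀ v, p v = none ↔ v = r := fun v => by
    simpa using Finset.ext_iff.1 hr v
  exact ⟨r, (hr' r).2 rfl, fun v hv => (hr' v).1 hv⟩

lemma parentGraph_isTree {p : V → Option V} {n : ℕ} (hn : Fintype.card V = n + 1)
    (hp : p ∈ edgeForests V n) : (parentGraph p).IsTree := by
  classical
  obtain ⟨hpf, hpk⟩ := mem_edgeForests.1 hp
  obtain ⟨r, hr, hru⟩ := exists_unique_root hn hp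
  have hreach : ∀ v, (parentGraph p).Reachable v r := by
    intro v
    obtain ⟨r', h1, h2⟩ := exists_root hpf v
    rw [hru r' h2] at h1
    rw [SimpleGraph.reachable_iff_reflTransGen]
    exact Relation.ReflTransGen.mono (fun a b h => (parentGraph_adj hpf).2 (Or.inl h)) _ _ h1
  have hconn : (parentGraph p).Connected :=
    { preconnected := fun v w => (hreach v).trans (hreach w).symm
      nonempty := ⟨r⟩ }
  rw [SimpleGraph.isTree_iff_connected_and_card]
  refine ⟨hconn, le_antisymm ?_ hconn.card_vert_le_card_edgeSet_add_one⟩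
  have hsub : (parentGraph p).edgeFinset ⊆
      (Finset.univ.filter fun v => p v ≠ none).image fun v => s(v, (p v).getD v) := by
    intro e
    refine Sym2.ind (fun v w => ?_) e
    intro h
    rw [SimpleGraph.mem_edgeFinset, SimpleGraph.mem_edgeSet, parentGraph_adj hpf] at h
    rw [Finset.mem_image]
    rcases h with h | h
    · exact ⟨v, by simp [h], by simp [h]⟩
    · exact ⟨w, by simp [h], by simp [h, Sym2.eq_swap]⟩
  have := (Finset.card_le_card hsub).trans Finset.card_image_le
  rw [hpk] at this
  rw [Nat.card_eq_fintype_card, Nat.card_eq_fintype_card, ← SimpleGraph.edgeFinset_card, hn]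
  omega

/-- A parent function is determined by its graph and its root: if two of them disagree at `v`,
they also disagree at the parent of `v`, hence at the root. -/
lemma parent_eq_of_graph_eq {p q : V → Option V} (hp : IsForest p) (hq : IsForest q)
    {r : V} (hpr : ∀ v, p v = none ↔ v = r) (hqr : ∀ v, q v = none ↔ v = r)
    (h : parentGraph p = parentGraph q) : p = q := by
  have hp' := hp
  obtain ⟨f, hf⟩ := hp'
  funext v
  induction hk : f v using Nat.strong_induction_on generalizing v with
  | _ k ih =>
    cases hv : p v with
    | none => exact ((hqr v).2 ((hpr v).1 hv)).symm
    | some u =>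
      have hadj : (parentGraph q).Adj v u := h ▸ (parentGraph_adj hp).2 (Or.inl hv)
      rcases (parentGraph_adj hq).1 hadj with h1 | h1
      · exact h1.symm
      · have := ih (f u) (hk ▸ hf v u hv) u rfl
        rw [h1] at this
        have h2 := hf u v this
        have h3 := hf v u hv
        omega

/-- A lower bound for the number of labelled trees (in fact an equality, Cayley's formula). -/
lemma card_trees_ge {n : ℕ} (hn : Fintype.card V = n + 1) :
    (n + 1) ^ n ≤ (n + 1) * Nat.card {G : SimpleGraph V // G.IsTree} := by
  classical
  have h1 := card_edgeForests_ge (V := V) n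
  rw [hn, Nat.add_sub_cancel, Nat.descFactorial_self] at h1
  have h2 := Nat.le_of_mul_le_mul_right h1 (Nat.factorial_pos n)
  have hroot : ∀ p : {p // p ∈ edgeForests V n}, ∃ r, ∀ v, p.1 v = none ↔ v = r := by
    intro p
    obtain ⟨r, hr, hru⟩ := exists_unique_root hn p.2
    exact ⟨r, fun v => ⟨hru v, fun h => h ▸ hr⟩⟩
  choose root hroot using hroot
  have hinj : Function.Injective (fun p : {p // p ∈ edgeForests V n} =>
      ((root p, ⟨parentGraph p.1, parentGraph_isTree hn p.2⟩) :
        V × {G : SimpleGraph V // G.IsTree})) := by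
    intro p q h
    simp only [Prod.mk.injEq, Subtype.mk.injEq] at h
    apply Subtype.ext
    refine parent_eq_of_graph_eq (mem_edgeForests.1 p.2).1 (mem_edgeForests.1 q.2).1
      (hroot p) ?_ h.2
    rw [h.1]
    exact hroot q
  have h3 := Nat.card_le_card_of_injective _ hinj
  rw [Nat.card_prod, Nat.card_eq_fintype_card, Nat.card_eq_fintype_card, Fintype.card_coe,
    hn] at h3
  exact h2.trans h3

end LowerBound

/-! ### Certified numerical bounds -/

section Numerics

/-- Upper bounds for `10 ^ 9 * ∑ₙ typeCoeff n q / e ^ n`, for `q = 0, …, 250`, obtained by running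
the recursion in `sum_typeCoeff_le` with upward rounding. -/
def typeTable : List ℕ := [
    0, 1000000000, 367879442, 135335284, 117454711, 43209174, 65682836, 24163366, 35502690,
    22218530, 24069508, 8854678, 25000947, 9197335, 12272716, 10362606, 12453848, 4581515,
    12010444, 4418396, 9707510, 6841350, 5774246, 2124227, 8651610, 4116266, 4897801, 3982501,
    5547906, 2040961, 6356056, 2338263, 4231921, 2755188, 2699023, 2036995, 5337671, 1963620,
    2347813, 2108437, 3867702, 1422849, 3882233, 1428194, 2491303, 2487567, 1696585, 624139,
    3149482, 1450564, 2401103, 1503358, 2190401, 805804, 2342800, 1244472, 2252063, 1426453,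
    1275591, 469264, 2816265, 1036046, 1241339, 1476847, 1729465, 1033644, 1875196, 689847,
    1164776, 715980, 1356467, 499017, 2064907, 759637, 1001831, 1120714, 1196997, 654310,
    1367494, 503073, 1489642, 1010733, 895265, 329350, 1757799, 844622, 836123, 583807, 1018030,
    374513, 1573671, 801160, 880887, 640510, 465239, 362068, 1195792, 439908, 777223, 693358,
    1168427, 429841, 921184, 338885, 832517, 845347, 607425, 223460, 1090547, 401190, 786530,
    555096, 965761, 355284, 823461, 394721, 577980, 533869, 369032, 246465, 1192573, 477926,
    556960, 397456, 561070, 357376, 970264, 356941, 650669, 432653, 680029, 250169, 872570,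
    427764, 411146, 547682, 576548, 212101, 499037, 183586, 660368, 327404, 304024, 193284,
    812952, 387257, 421919, 437820, 494508, 181920, 734007, 270027, 492721, 402601, 479590,
    277466, 696326, 256165, 279309, 211806, 579467, 264503, 610005, 224409, 386464, 417841,
    274877, 101122, 721873, 307858, 505218, 396154, 427793, 157377, 376128, 280736, 443626,
    226709, 221178, 81367, 738743, 271769, 462419, 310329, 405491, 234019, 410472, 191573,
    230468, 322165, 319044, 117370, 488787, 179815, 227984, 302605, 412435, 151727, 476991,
    175476, 493617, 274953, 259280, 144701, 430618, 219896, 205564, 180811, 345643, 166279,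
    571924, 210400, 286453, 172915, 145819, 115355, 464528, 227391, 231242, 187875, 393879,
    187038, 342050, 125834, 371598, 354234, 261018, 96024, 394427, 145102, 255495, 251783,
    280141, 103059, 349552, 155562, 184597, 135993, 180692, 66473, 484404, 178203, 263662,
    228512, 270434, 186157, 287638, 146454, 235449, 131190, 236437
]

/-- The entry of `typeTable` at `q`. -/
def typeBound (q : ℕ) : ℕ := typeTable.getD q 0

/-- Number of prime factors of `n` by trial division with divisors starting at `d`; the first
argument is the fuel. A structurally recursive form of `ArithmeticFunction.cardFactors`. -/
def trialOmega : ℕ → ℕ → ℕ → ℕ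
  | 0, _, _ => 0
  | f + 1, d, n => if n % d = 0 then 1 + trialOmega f d (n / d) else trialOmega f (d + 1) n

lemma trialOmega_eq (f d n : ℕ) (hd : 2 ≤ d) (hn : 0 < n)
    (hp : ∀ p, p.Prime → p ∣ n → d ≤ p) (hf : n < f + d) :
    trialOmega f d n = ArithmeticFunction.cardFactors n := by
  induction f generalizing d n with
  | zero =>
    have h1 : n = 1 := by
      by_contra h
      obtain ⟨p, h2, h3⟩ := Nat.exists_prime_and_dvd h
      have := hp p h2 h3
      have := Nat.le_of_dvd hn h3
      omega
    subst h1
    simp [trialOmega]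
  | succ f ih =>
    unfold trialOmega
    split_ifs with h
    · obtain ⟨m, rfl⟩ := Nat.dvd_of_mod_eq_zero h
      have hm : 0 < m := Nat.pos_of_mul_pos_left hn
      have hdp : d.Prime := by
        have h1 := Nat.minFac_prime (n := d) (by omega)
        have h2 := hp _ h1 ((Nat.minFac_dvd d).mul_right m)
        have h3 := Nat.minFac_le (n := d) (by omega)
        rwa [le_antisymm h3 h2] at h1
      rw [Nat.mul_div_cancel_left _ (by omega),
        ArithmeticFunction.cardFactors_mul (by omega) (by omega),
        ArithmeticFunction.cardFactors_apply_prime hdp,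
        ih d m hd hm (fun p h1 h2 => hp p h1 (h2.mul_left d)) (by nlinarith)]
    · refine ih (d + 1) n (by omega) hn (fun p h1 h2 => ?_) (by omega)
      rcases (hp p h1 h2).lt_or_eq with h3 | rfl
      · exact h3
      · exact absurd (Nat.mod_eq_zero_of_dvd h2) h

set_option maxRecDepth 100000 in
lemma typeBound_check : ∀ i < 249,
    ∑ d ∈ Finset.range (i + 2), (if (i + 2) % (d + 1) = 0 then
      trialOmega (d + 1) 2 (d + 1) * (367879442 * typeBound d * typeBound ((i + 2) / (d + 1)))
      else 0) ≤ trialOmega (i + 2) 2 (i + 2) * typeBound (i + 2) * 10 ^ 18 := by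
  decide +kernel

/-- Upper bound for `10 ^ 9 * log (1 + 1 / q)`. -/
def logBound (q : ℕ) : ℕ :=
  10 ^ 9 * (60 * q * (q + 1) * (2 * q + 1) ^ 2 + 20 * q * (q + 1) + 3) /
    (30 * q * (q + 1) * (2 * q + 1) ^ 3) + 1

set_option maxRecDepth 100000 in
lemma logBound_check :
    ∑ q ∈ Finset.range 250, 367879442 * typeBound (q + 1) * logBound (q + 1) +
      logBound 251 * 10 ^ 18 <
    3502 * 10 ^ 23 + ∑ q ∈ Finset.range 250, 367879442 * typeBound (q + 1) * 3976143 := by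
  decide +kernel

end Numerics

section NumericsReal

lemma cardFactors_eq_trialOmega {n : ℕ} (hn : 0 < n) :
    ArithmeticFunction.cardFactors n = trialOmega n 2 n :=
  (trialOmega_eq n 2 n le_rfl hn (fun _ h _ => h.two_le) (by omega)).symm

lemma sum_typeCoeff_le_table {x : ℝ} (hx : 0 ≤ x) (hx' : x ≤ 0.367879442) (N q : ℕ)
    (hq : q ≤ 250) : ∑ n ∈ Finset.range N, typeCoeff n q * x ^ n ≤ typeBound q / 10 ^ 9 := by
  refine sum_typeCoeff_le hx 250 (fun q => (typeBound q : ℝ) / 10 ^ 9) (fun q => by positivity)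
    ?_ (fun q h2 hq => ?_) N q hq
  · have : typeBound 1 = 10 ^ 9 := by decide +kernel
    simp only [this]
    norm_num
  · obtain ⟨i, rfl⟩ := Nat.exists_eq_add_of_le' h2
    have hc := typeBound_check i (by omega)
    rw [← cardFactors_eq_trialOmega (by omega)] at hc
    have hc' : (∑ d ∈ Finset.range (i + 2), (if (i + 2) % (d + 1) = 0 then
        (ArithmeticFunction.cardFactors (d + 1) : ℝ) *
          (367879442 * typeBound d * typeBound ((i + 2) / (d + 1))) else 0)) ≤
        ArithmeticFunction.cardFactors (i + 2) * typeBound (i + 2) * 10 ^ 18 := by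
      refine le_trans (le_of_eq ?_) (Nat.cast_le (α := ℝ) |>.2 hc |>.trans (le_of_eq ?_))
      · rw [Nat.cast_sum]
        refine Finset.sum_congr rfl fun d _ => ?_
        rw [cardFactors_eq_trialOmega (Nat.succ_pos d)]
        split_ifs <;> push_cast <;> rfl
      · push_cast; ring
    rw [Nat.sum_divisorsAntidiagonal (n := i + 2)
      (f := fun a b => (ArithmeticFunction.cardFactors a : ℝ) *
        (x * ((typeBound (a - 1) : ℝ) / 10 ^ 9) * ((typeBound b : ℝ) / 10 ^ 9))),
      Nat.divisors, Finset.sum_filter, Finset.sum_Ico_eq_sum_range]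
    have hd : ∀ d ∈ Finset.range (i + 2 + 1 - 1),
        (if 1 + d ∣ i + 2 then (ArithmeticFunction.cardFactors (1 + d) : ℝ) *
          (x * ((typeBound (1 + d - 1) : ℝ) / 10 ^ 9) *
            ((typeBound ((i + 2) / (1 + d)) : ℝ) / 10 ^ 9)) else 0) ≤
        (if (i + 2) % (d + 1) = 0 then
        (ArithmeticFunction.cardFactors (d + 1) : ℝ) *
          (367879442 * typeBound d * typeBound ((i + 2) / (d + 1))) else 0) / 10 ^ 27 := by
      intro d _
      rw [add_comm 1 d, Nat.add_sub_cancel]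
      simp only [Nat.dvd_iff_mod_eq_zero]
      split_ifs with h
      · rw [mul_div_assoc]
        refine mul_le_mul_of_nonneg_left ?_ (by positivity)
        have : (367879442 * (typeBound d : ℝ) * typeBound ((i + 2) / (d + 1))) / 10 ^ 27 =
          0.367879442 * ((typeBound d : ℝ) / 10 ^ 9) *
            ((typeBound ((i + 2) / (d + 1)) : ℝ) / 10 ^ 9) := by ring
        rw [this]
        gcongr
      · simp
    refine (Finset.sum_le_sum hd).trans ?_
    rw [← Finset.sum_div, div_le_iff₀ (by positivity)]
    refine (hc'.trans (le_of_eq ?_))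
    ring

/-- Three terms of the series `log (1 + 1 / q) = 2 ∑ z ^ (2 k + 1) / (2 k + 1)`, `z = 1 / (2 q + 1)`,
the tail being compared with a geometric series. -/
lemma log_one_add_inv_le {q : ℝ} (hq : 0 < q) :
    Real.log (1 + q⁻¹) ≤ (60 * q * (q + 1) * (2 * q + 1) ^ 2 + 20 * q * (q + 1) + 3) /
    (30 * q * (q + 1) * (2 * q + 1) ^ 3) := by
  have h := Real.hasSum_log_one_add_inv hq
  set z : ℝ := 1 / (2 * q + 1) with hz
  have hz0 : 0 < z := by positivity
  have hz1 : z ^ 2 < 1 := by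
    have : z < 1 := by rw [hz, div_lt_one (by positivity)]; linarith
    nlinarith
  have h2 := (hasSum_nat_add_iff' 2).2 h
  have hg : HasSum (fun k : ℕ => 2 / 5 * z ^ 5 * (z ^ 2) ^ k) (2 / 5 * z ^ 5 * (1 - z ^ 2)⁻¹) :=
    (hasSum_geometric_of_lt_one (by positivity) hz1).mul_left _
  have h3 := hasSum_le (fun k => ?_) h2 hg
  · simp only [Finset.sum_range_succ, Finset.sum_range_zero] at h3
    have h4 : (1 - z ^ 2) = 4 * q * (q + 1) / (2 * q + 1) ^ 2 := by
      rw [hz]; field_simp; ring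
    rw [h4] at h3
    have h5 : 2 / 5 * z ^ 5 * (4 * q * (q + 1) / (2 * q + 1) ^ 2)⁻¹ + 2 * z + 2 / 3 * z ^ 3 =
      (60 * q * (q + 1) * (2 * q + 1) ^ 2 + 20 * q * (q + 1) + 3) /
        (30 * q * (q + 1) * (2 * q + 1) ^ 3) := by
      rw [hz]; field_simp; ring
    rw [← h5, inv_div]
    norm_num at h3
    linarith
  · have h6 : z ^ (2 * (k + 2) + 1) = z ^ 5 * (z ^ 2) ^ k := by rw [← pow_mul, ← pow_add]; ring_nf
    rw [h6, mul_assoc (2 / 5)]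
    refine mul_le_mul_of_nonneg_right ?_ (by positivity)
    push_cast
    rw [mul_one_div]
    refine div_le_div_of_nonneg_left (by norm_num) (by norm_num) ?_
    have : (0 : ℝ) ≤ k := Nat.cast_nonneg k
    linarith

lemma log_le_logBound {q : ℕ} (hq : 1 ≤ q) :
    Real.log (1 + (q : ℝ)⁻¹) ≤ logBound q / 10 ^ 9 := by
  have hq' : (0 : ℝ) < q := by exact_mod_cast hq
  refine (log_one_add_inv_le hq').trans ?_
  rw [le_div_iff₀ (by positivity)]
  have h := (Nat.lt_succ_floor ((10 ^ 9 * (60 * q * (q + 1) * (2 * q + 1) ^ 2 +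
    20 * q * (q + 1) + 3) : ℕ) / ((30 * q * (q + 1) * (2 * q + 1) ^ 3 : ℕ) : ℝ))).le
  rw [Nat.floor_div_eq_div] at h
  refine le_trans (le_of_eq ?_) h
  push_cast
  ring

lemma log_252_div_251_ge : (3976143 : ℝ) / 10 ^ 9 ≤ Real.log (1 + (251 : ℝ)⁻¹) := by
  have h := Real.hasSum_log_one_add_inv (a := 251) (by norm_num)
  have h1 := h.summable.sum_le_tsum (Finset.range 1) (fun k _ => by positivity)
  rw [h.tsum_eq] at h1
  refine le_trans ?_ h1
  norm_num

/-- The numerical heart of the estimate. The weights bound the probability `ν_q (1 / e) / e` that a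
Poisson forest of critical Galton–Watson trees has `q` closed sets, so this bounds the mean of
`log (1 + 1 / q)`, values `q > 250` being counted as `q = 251`. -/
lemma sum_log_lt : ∑ q ∈ Finset.Icc 1 250, 0.367879442 * ((typeBound q : ℝ) / 10 ^ 9) *
      (Real.log (1 + (q : ℝ)⁻¹) - Real.log (1 + (251 : ℝ)⁻¹)) + Real.log (1 + (251 : ℝ)⁻¹) <
    0.3502 := by
  have h251 : Real.log (1 + (251 : ℝ)⁻¹) ≤ logBound 251 / 10 ^ 9 := by
    exact_mod_cast log_le_logBound (q := 251) (by norm_num)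
  have hc : ((∑ q ∈ Finset.range 250, 367879442 * (typeBound (q + 1) : ℝ) * logBound (q + 1)) +
      logBound 251 * 10 ^ 18 : ℝ) < 3502 * 10 ^ 23 +
        ∑ q ∈ Finset.range 250, 367879442 * (typeBound (q + 1) : ℝ) * 3976143 := by
    exact_mod_cast logBound_check
  have hI : ∀ f : ℕ → ℝ, ∑ q ∈ Finset.Icc 1 250, f q = ∑ q ∈ Finset.range 250, f (q + 1) := by
    intro f
    have h : Finset.Icc 1 250 = Finset.Ico 1 251 := by ext; simp; omega
    rw [h, Finset.sum_Ico_eq_sum_range]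
    exact Finset.sum_congr rfl fun q _ => by rw [add_comm]
  rw [hI]
  have h1 : ∑ q ∈ Finset.range 250, 0.367879442 * ((typeBound (q + 1) : ℝ) / 10 ^ 9) *
      (Real.log (1 + ((q + 1 : ℕ) : ℝ)⁻¹) - Real.log (1 + (251 : ℝ)⁻¹)) ≤
      ∑ q ∈ Finset.range 250, (367879442 * (typeBound (q + 1) : ℝ) * logBound (q + 1) -
        367879442 * (typeBound (q + 1) : ℝ) * 3976143) / 10 ^ 27 := by
    refine Finset.sum_le_sum fun q _ => ?_
    have := log_le_logBound (q := q + 1) (by omega)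
    have h2 := log_252_div_251_ge
    calc _ ≤ 0.367879442 * ((typeBound (q + 1) : ℝ) / 10 ^ 9) *
          (logBound (q + 1) / 10 ^ 9 - 3976143 / 10 ^ 9) := by gcongr
      _ = _ := by ring
  rw [← Finset.sum_div, Finset.sum_sub_distrib] at h1
  have : ((∑ q ∈ Finset.range 250, 367879442 * (typeBound (q + 1) : ℝ) * logBound (q + 1)) -
      ∑ q ∈ Finset.range 250, 367879442 * (typeBound (q + 1) : ℝ) * 3976143) / 10 ^ 27 <
      (3502 * 10 ^ 23 - logBound 251 * 10 ^ 18) / 10 ^ 27 := by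
    rw [div_lt_div_iff_of_pos_right (by positivity)]
    linarith
  have h3 : ((3502 * 10 ^ 23 - logBound 251 * 10 ^ 18) / 10 ^ 27 : ℝ) =
    0.3502 - logBound 251 / 10 ^ 9 := by ring
  linarith

lemma exp_3502_lt : Real.exp 0.3502 < 1.4196 := by
  refine (Real.exp_bound' (n := 8) (by norm_num) (by norm_num) (by norm_num)).trans_lt ?_
  norm_num [Finset.sum_range_succ, Nat.factorial]

end NumericsReal

/-! ### Growth of the moments -/

section Moment

/-- The correction `(1 + q) ^ s - h ^ s * q ^ s`, `h = 252 / 251`, for `1 ≤ q ≤ 250`. -/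
noncomputable def momentCorr (s : ℝ) (q : ℕ) : ℝ :=
  if q ∈ Finset.Icc 1 250 then (1 + (q : ℝ)) ^ s - (1 + (251 : ℝ)⁻¹) ^ s * (q : ℝ) ^ s else 0

lemma momentCorr_nonneg {s : ℝ} (hs : 0 ≤ s) (q : ℕ) : 0 ≤ momentCorr s q := by
  unfold momentCorr
  split_ifs with hq
  · rw [Finset.mem_Icc] at hq
    rw [← Real.mul_rpow (by positivity) (by positivity), sub_nonneg]
    refine Real.rpow_le_rpow (by positivity) ?_ hs
    have : (q : ℝ) ≤ 250 := by exact_mod_cast hq.2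
    nlinarith
  · exact le_rfl

lemma rpow_one_add_le {s : ℝ} (hs : 0 ≤ s) (a : ℕ) (ha : 1 ≤ a) :
    (1 + (a : ℝ)) ^ s ≤ (1 + (251 : ℝ)⁻¹) ^ s * (a : ℝ) ^ s +
      ∑ q ∈ Finset.Icc 1 250, momentCorr s q * (if a = q then 1 else 0) := by
  by_cases h : a ∈ Finset.Icc 1 250
  · have : ∑ q ∈ Finset.Icc 1 250, momentCorr s q * (if a = q then 1 else 0) = momentCorr s a := by
      simp only [mul_ite, mul_one, mul_zero]
      rw [Finset.sum_ite_eq, if_pos h]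
    rw [this, momentCorr, if_pos h]
    linarith
  · have h0 : 0 ≤ ∑ q ∈ Finset.Icc 1 250, momentCorr s q * (if a = q then (1 : ℝ) else 0) :=
      Finset.sum_nonneg fun q _ => mul_nonneg (momentCorr_nonneg hs q) (by positivity)
    have h1 : (1 + (a : ℝ)) ^ s ≤ (1 + (251 : ℝ)⁻¹) ^ s * (a : ℝ) ^ s := by
      rw [← Real.mul_rpow (by positivity) (by positivity)]
      refine Real.rpow_le_rpow (by positivity) ?_ hs
      have : 251 ≤ a := by
        rw [Finset.mem_Icc] at h
        omega
      have : (251 : ℝ) ≤ a := by exact_mod_cast this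
      nlinarith
    linarith

/-- Both sides agree at `s = 0`, and `sum_log_lt` compares their derivatives there. -/
lemma exists_exponent : ∃ s : ℝ, 0 < s ∧ s < 1 ∧ (1 + (251 : ℝ)⁻¹) ^ s +
    ∑ q ∈ Finset.Icc 1 250, 0.367879442 * ((typeBound q : ℝ) / 10 ^ 9) * momentCorr s q ≤
      Real.exp (0.3502 * s) := by
  set F : ℝ → ℝ := fun s => (1 + (251 : ℝ)⁻¹) ^ s +
    ∑ q ∈ Finset.Icc 1 250, 0.367879442 * ((typeBound q : ℝ) / 10 ^ 9) *
      ((1 + (q : ℝ)) ^ s - (1 + (251 : ℝ)⁻¹) ^ s * (q : ℝ) ^ s) - Real.exp (0.3502 * s) with hF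
  set F' : ℝ := Real.log (1 + (251 : ℝ)⁻¹) +
    ∑ q ∈ Finset.Icc 1 250, 0.367879442 * ((typeBound q : ℝ) / 10 ^ 9) *
      (Real.log (1 + (q : ℝ)⁻¹) - Real.log (1 + (251 : ℝ)⁻¹)) - 0.3502 with hF'
  have hneg : F' < 0 := by
    have := sum_log_lt
    rw [hF']
    linarith
  have hpow : ∀ a : ℝ, 0 < a → HasDerivAt (fun s : ℝ => a ^ s) (Real.log a) 0 := by
    intro a ha
    simpa using (Real.hasStrictDerivAt_const_rpow ha 0).hasDerivAt
  have hd : HasDerivAt F F' 0 := by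
    refine ((hpow _ (by positivity)).add (HasDerivAt.fun_sum fun q hq => ?_)).sub ?_
    · have hq1 : (0 : ℝ) < q := by exact_mod_cast (Finset.mem_Icc.1 hq).1
      have h1 := ((hpow (1 + q) (by positivity)).sub
        ((hpow (1 + (251 : ℝ)⁻¹) (by positivity)).mul (hpow q hq1))).const_mul
          (0.367879442 * ((typeBound q : ℝ) / 10 ^ 9))
      refine h1.congr_deriv ?_
      have h2 : (1 + (q : ℝ)⁻¹) = (1 + q) / q := by field_simp; ring
      rw [h2, Real.log_div (by positivity) (by positivity)]
      simp only [Real.rpow_zero]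
      ring
    · simpa using ((hasDerivAt_id (0 : ℝ)).const_mul 0.3502).exp
  have hF0 : F 0 = 0 := by simp [hF]
  have hs := (hasDerivAt_iff_tendsto_slope.1 hd).eventually_lt_const hneg
  have hs' : ∀ᶠ s in 𝓝[>] (0 : ℝ), slope F 0 s < 0 :=
    hs.filter_mono (nhdsWithin_mono _ fun x hx => ne_of_gt hx)
  have h1 : ∀ᶠ s in 𝓝[>] (0 : ℝ), s ∈ Set.Ioo (0 : ℝ) 1 := Ioo_mem_nhdsGT one_pos
  obtain ⟨s, hs1, hs0, hs2⟩ := (hs'.and h1).exists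
  refine ⟨s, hs0, hs2, ?_⟩
  rw [slope_def_field, hF0, sub_zero, sub_zero, div_neg_iff] at hs1
  have hFs : F s < 0 := by
    rcases hs1 with h | h
    · linarith [h.2]
    · exact h.1
  have he : ∑ q ∈ Finset.Icc 1 250, 0.367879442 * ((typeBound q : ℝ) / 10 ^ 9) * momentCorr s q =
      ∑ q ∈ Finset.Icc 1 250, 0.367879442 * ((typeBound q : ℝ) / 10 ^ 9) *
      ((1 + (q : ℝ)) ^ s - (1 + (251 : ℝ)⁻¹) ^ s * (q : ℝ) ^ s) :=
    Finset.sum_congr rfl fun q hq => by rw [momentCorr, if_pos hq]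
  rw [he]
  simp only [hF] at hFs
  linarith

/-- The partial sums of the series of the `powCoeff` stay below `e` at `x = exp (-1 - 0.3502 s)`:
if they do so up to some degree, the exponent in `sum_le_exp` is at most `1`, and hence they do so
one degree further. -/
lemma powCoeff_le {s : ℝ} (hs0 : 0 < s) (hs : (1 + (251 : ℝ)⁻¹) ^ s +
    ∑ q ∈ Finset.Icc 1 250, 0.367879442 * ((typeBound q : ℝ) / 10 ^ 9) * momentCorr s q ≤
      Real.exp (0.3502 * s)) (n : ℕ) :
    powCoeff ((1 + (251 : ℝ)⁻¹) ^ s) (momentCorr s) 250 n ≤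
      Real.exp 1 * Real.exp (1 + 0.3502 * s) ^ n := by
  set h : ℝ := (1 + (251 : ℝ)⁻¹) ^ s with hh
  have hh0 : 0 ≤ h := by positivity
  set x : ℝ := Real.exp (-(1 + 0.3502 * s)) with hx
  have hx0 : 0 < x := Real.exp_pos _
  have hxe : x * Real.exp 1 = Real.exp (-(0.3502 * s)) := by
    rw [hx, ← Real.exp_add]; ring_nf
  have hx1 : x ≤ 0.367879442 := by
    have h1 : x ≤ Real.exp (-1) := Real.exp_le_exp.2 (by nlinarith)
    have := Real.exp_neg_one_lt_d9
    linarith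
  have hδ := momentCorr_nonneg hs0.le
  have hβ := powCoeff_nonneg hh0 hδ 250
  have hmain : ∀ N, ∑ n ∈ Finset.range (N + 1), powCoeff h (momentCorr s) 250 n * x ^ n ≤
      Real.exp 1 := by
    intro N
    have hstep := sum_le_exp
      (fun j => h * powCoeff h (momentCorr s) 250 j +
        ∑ q ∈ Finset.Icc 1 250, momentCorr s q * typeCoeff j q)
      (powCoeff h (momentCorr s) 250)
      (fun j => add_nonneg (mul_nonneg hh0 (hβ j)) (Finset.sum_nonneg fun q _ =>
        mul_nonneg (hδ q) (typeCoeff_nonneg j q))) hβ (by simp [powCoeff])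
      (powCoeff_succ h (momentCorr s) 250)
    induction N with
    | zero =>
      refine (hstep 0 hx0.le).trans ?_
      simp
    | succ N ih =>
      refine (hstep (N + 1) hx0.le).trans (Real.exp_le_exp.2 ?_)
      have h1 : ∑ j ∈ Finset.range (N + 1), (h * powCoeff h (momentCorr s) 250 j +
          ∑ q ∈ Finset.Icc 1 250, momentCorr s q * typeCoeff j q) * x ^ (j + 1) =
          x * (h * ∑ j ∈ Finset.range (N + 1), powCoeff h (momentCorr s) 250 j * x ^ j +
            ∑ q ∈ Finset.Icc 1 250, momentCorr s q *
              ∑ j ∈ Finset.range (N + 1), typeCoeff j q * x ^ j) := by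
        simp only [Finset.mul_sum, mul_add]
        rw [Finset.sum_comm (s := Finset.Icc 1 250), ← Finset.sum_add_distrib]
        refine Finset.sum_congr rfl fun j _ => ?_
        rw [add_mul, Finset.sum_mul]
        congr 1
        · ring
        · exact Finset.sum_congr rfl fun q _ => by ring
      rw [h1]
      have h2 : ∑ q ∈ Finset.Icc 1 250, momentCorr s q *
              ∑ j ∈ Finset.range (N + 1), typeCoeff j q * x ^ j ≤
          ∑ q ∈ Finset.Icc 1 250, momentCorr s q * ((typeBound q : ℝ) / 10 ^ 9) :=
        Finset.sum_le_sum fun q hq => mul_le_mul_of_nonneg_left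
          (sum_typeCoeff_le_table hx0.le hx1 _ q (Finset.mem_Icc.1 hq).2) (hδ q)
      set T := ∑ q ∈ Finset.Icc 1 250, momentCorr s q * ((typeBound q : ℝ) / 10 ^ 9) with hT
      have hT0 : 0 ≤ T := Finset.sum_nonneg fun q _ => mul_nonneg (hδ q) (by positivity)
      have hs' : h + 0.367879442 * T ≤ Real.exp (0.3502 * s) := by
        refine le_trans (le_of_eq ?_) hs
        rw [hT, Finset.mul_sum]
        congr 1
        exact Finset.sum_congr rfl fun q _ => by ring
      have he : Real.exp (-1) ≤ 0.367879442 := by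
        have := Real.exp_neg_one_lt_d9
        linarith
      have hxT : x * T ≤ Real.exp (-(0.3502 * s)) * (0.367879442 * T) := by
        have : x = Real.exp (-(0.3502 * s)) * Real.exp (-1) := by
          rw [hx, ← Real.exp_add]; ring_nf
        rw [this, mul_assoc]
        gcongr
      calc x * (h * _ + _) ≤ x * (h * Real.exp 1 + T) := by gcongr
        _ = (x * Real.exp 1) * h + x * T := by ring
        _ ≤ Real.exp (-(0.3502 * s)) * h + Real.exp (-(0.3502 * s)) * (0.367879442 * T) := by
          rw [hxe]; gcongr
        _ = Real.exp (-(0.3502 * s)) * (h + 0.367879442 * T) := by ring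
        _ ≤ Real.exp (-(0.3502 * s)) * Real.exp (0.3502 * s) := by gcongr
        _ = 1 := by rw [← Real.exp_add]; simp
  have h3 : powCoeff h (momentCorr s) 250 n * x ^ n ≤ Real.exp 1 :=
    (Finset.single_le_sum (f := fun n => powCoeff h (momentCorr s) 250 n * x ^ n)
      (fun i _ => mul_nonneg (hβ i) (by positivity))
      (Finset.self_mem_range_succ n)).trans (hmain n)
  have h4 : x ^ n * Real.exp (1 + 0.3502 * s) ^ n = 1 := by
    rw [← mul_pow, hx, ← Real.exp_add]; simp
  calc powCoeff h (momentCorr s) 250 n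
      = powCoeff h (momentCorr s) 250 n * (x ^ n * Real.exp (1 + 0.3502 * s) ^ n) := by
        rw [h4, mul_one]
    _ = (powCoeff h (momentCorr s) 250 n * x ^ n) * Real.exp (1 + 0.3502 * s) ^ n := by ring
    _ ≤ _ := by gcongr

lemma factorial_mul_exp_le (n : ℕ) :
    ((n + 1)! : ℝ) * Real.exp 1 ^ (n + 1) ≤ Real.exp 1 * ((n : ℝ) + 1) ^ (n + 2) := by
  induction n with
  | zero => simp
  | succ n ih =>
    have h1 := Real.one_sub_div_pow_le_exp_neg (n := n + 2) (t := 1) (by push_cast; linarith)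
    have h2 : (1 - 1 / ((n + 2 : ℕ) : ℝ)) = ((n : ℝ) + 1) / (n + 2) := by
      push_cast; field_simp; ring
    rw [h2, div_pow, Real.exp_neg, div_le_iff₀ (by positivity), inv_mul_eq_div,
      le_div_iff₀ (by positivity)] at h1
    rw [Nat.factorial_succ]
    push_cast
    calc ((n : ℝ) + 1 + 1) * (n + 1)! * Real.exp 1 ^ (n + 1 + 1)
        = ((n : ℝ) + 2) * Real.exp 1 * (((n + 1)! : ℝ) * Real.exp 1 ^ (n + 1)) := by ring
      _ ≤ ((n : ℝ) + 2) * Real.exp 1 * (Real.exp 1 * ((n : ℝ) + 1) ^ (n + 2)) := by gcongr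
      _ = ((n : ℝ) + 2) * Real.exp 1 * (((n : ℝ) + 1) ^ (n + 2) * Real.exp 1) := by ring
      _ ≤ ((n : ℝ) + 2) * Real.exp 1 * ((n : ℝ) + 2) ^ (n + 2) := by gcongr
      _ = _ := by ring

end Moment

/-! ### The random labelled tree -/

section Limit

/-- Rooting each tree turns it into a rooted forest that determines it, so the `s`-th moment of the
number of subtrees is controlled by that of the number of closed sets. -/
lemma sum_subtreeCount_rpow_le {s : ℝ} (hs0 : 0 < s) (hs : (1 + (251 : ℝ)⁻¹) ^ s +
    ∑ q ∈ Finset.Icc 1 250, 0.367879442 * ((typeBound q : ℝ) / 10 ^ 9) * momentCorr s q ≤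
      Real.exp (0.3502 * s)) {n : ℕ} (hn : 0 < n) (A : Finset (SimpleGraph (Fin n)))
    (hA : ∀ G ∈ A, G.IsTree) :
    ∑ G ∈ A, (subtreeCount G : ℝ) ^ s ≤
      (n : ℝ) ^ s * (n ! * (Real.exp 1 * Real.exp (1 + 0.3502 * s) ^ n)) := by
  classical
  have : Nonempty (Fin n) := ⟨⟨0, hn⟩⟩
  have hex : ∀ G : SimpleGraph (Fin n), ∃ p : Fin n → Option (Fin n), G ∈ A →
      p ∈ forests Finset.univ ∧ ∀ v w, G.Adj v w ↔ p v = some w ∨ p w = some v := by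
    intro G
    by_cases hG : G ∈ A
    · obtain ⟨p, hp, hp'⟩ := exists_parent (hA G hG)
      exact ⟨p, fun _ => ⟨hp, hp'⟩⟩
    · exact ⟨fun _ => none, fun h => absurd h hG⟩
  choose P hP using hex
  have hinj : Set.InjOn P A := by
    intro G hG G' hG' h
    ext v w
    rw [(hP G hG).2, (hP G' hG').2, h]
  calc ∑ G ∈ A, (subtreeCount G : ℝ) ^ s
      ≤ ∑ G ∈ A, (n : ℝ) ^ s * ((closedSets (P G) Finset.univ).card : ℝ) ^ s := by
        refine Finset.sum_le_sum fun G hG => ?_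
        rw [← Real.mul_rpow (by positivity) (by positivity)]
        refine Real.rpow_le_rpow (by positivity) ?_ hs0.le
        have := card_subtrees_le (mem_forests.1 (hP G hG).1).1 (hP G hG).2
        rw [Fintype.card_fin] at this
        exact_mod_cast this
    _ = (n : ℝ) ^ s * ∑ p ∈ A.image P, ((closedSets p Finset.univ).card : ℝ) ^ s := by
        rw [← Finset.mul_sum, Finset.sum_image hinj]
    _ ≤ (n : ℝ) ^ s * ∑ p ∈ forests (Finset.univ : Finset (Fin n)),
          ((closedSets p Finset.univ).card : ℝ) ^ s := by
        refine mul_le_mul_of_nonneg_left ?_ (by positivity)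
        refine Finset.sum_le_sum_of_subset_of_nonneg ?_ fun _ _ _ => by positivity
        intro p hp
        obtain ⟨G, hG, rfl⟩ := Finset.mem_image.1 hp
        exact (hP G hG).1
    _ ≤ _ := by
        refine mul_le_mul_of_nonneg_left ?_ (by positivity)
        refine (sum_rpow_le (by positivity) (momentCorr_nonneg hs0.le) 250
          (rpow_one_add_le hs0.le) Finset.univ).trans ?_
        rw [Finset.card_univ, Fintype.card_fin]
        exact mul_le_mul_of_nonneg_left (powCoeff_le hs0 hs n) (by positivity)

/-- Markov's inequality for the `s`-th power of the number of subtrees, with `s` from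
`exists_exponent`. -/
lemma exists_ratio : ∃ r : ℝ, 0 ≤ r ∧ r < 1 ∧ ∀ n : ℕ, 0 < n →
    (Nat.card {G : SimpleGraph (Fin n) //
      G.IsTree ∧ ¬ (subtreeCount G : ℝ) ≤ (1.41960 : ℝ) ^ n} : ℝ) ≤
    Real.exp 1 ^ 2 * ((n : ℝ) ^ 4 * r ^ n) *
      Nat.card {G : SimpleGraph (Fin n) // G.IsTree} := by
  classical
  obtain ⟨s, hs0, hs1, hs⟩ := exists_exponent
  refine ⟨(Real.exp 0.3502 / 1.4196) ^ s, by positivity, ?_, fun n hn => ?_⟩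
  · refine Real.rpow_lt_one (by positivity) ?_ hs0
    rw [div_lt_one (by norm_num)]
    exact exp_3502_lt
  set t : ℝ := (Nat.card {G : SimpleGraph (Fin n) // G.IsTree} : ℝ) with ht
  have hcard : (n : ℝ) ^ n ≤ (n : ℝ) ^ 2 * t := by
    obtain ⟨m, rfl⟩ := Nat.exists_eq_succ_of_ne_zero hn.ne'
    have h1 := card_trees_ge (V := Fin (m + 1)) (n := m) (Fintype.card_fin _)
    have h2 : (((m + 1 : ℕ) : ℝ)) ^ m ≤ ((m + 1 : ℕ) : ℝ) * t := by
      rw [ht]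
      exact_mod_cast h1
    calc (((m + 1 : ℕ) : ℝ)) ^ (m + 1) = (((m + 1 : ℕ) : ℝ)) * (((m + 1 : ℕ) : ℝ)) ^ m := by ring
      _ ≤ (((m + 1 : ℕ) : ℝ)) * (((m + 1 : ℕ) : ℝ) * t) := by gcongr
      _ = _ := by ring
  have hfac : (n ! : ℝ) * Real.exp 1 ^ n ≤ Real.exp 1 * (n : ℝ) ^ (n + 1) := by
    obtain ⟨m, rfl⟩ := Nat.exists_eq_succ_of_ne_zero hn.ne'
    exact_mod_cast factorial_mul_exp_le m
  have hns : (n : ℝ) ^ s ≤ n := by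
    have h1 : (1 : ℝ) ≤ n := by exact_mod_cast hn
    simpa using Real.rpow_le_rpow_of_exponent_le h1 hs1.le
  set A : Finset (SimpleGraph (Fin n)) :=
    Finset.univ.filter fun G => G.IsTree ∧ ¬ (subtreeCount G : ℝ) ≤ (1.41960 : ℝ) ^ n with hA
  have hAc : Nat.card {G : SimpleGraph (Fin n) //
      G.IsTree ∧ ¬ (subtreeCount G : ℝ) ≤ (1.41960 : ℝ) ^ n} = A.card := by
    rw [Nat.card_eq_fintype_card, Fintype.card_subtype]
  rw [hAc]
  have hmom := sum_subtreeCount_rpow_le hs0 hs hn A (fun G hG => (Finset.mem_filter.1 hG).2.1)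
  have hmarkov : (A.card : ℝ) * ((1.4196 : ℝ) ^ s) ^ n ≤ ∑ G ∈ A, (subtreeCount G : ℝ) ^ s := by
    rw [← nsmul_eq_mul]
    refine Finset.card_nsmul_le_sum _ _ _ fun G hG => ?_
    have h1 := (not_le.1 (Finset.mem_filter.1 hG).2.2).le
    rw [← Real.rpow_natCast, ← Real.rpow_mul (by norm_num), mul_comm s, Real.rpow_mul (by norm_num),
      Real.rpow_natCast]
    exact Real.rpow_le_rpow (by positivity) (le_trans (by norm_num) h1) hs0.le
  have hexp : Real.exp (1 + 0.3502 * s) ^ n = Real.exp 1 ^ n * (Real.exp 0.3502 ^ s) ^ n := by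
    rw [Real.exp_add, Real.exp_mul, mul_pow]
  have hpos : (0 : ℝ) < ((1.4196 : ℝ) ^ s) ^ n := by positivity
  rw [Real.div_rpow (by positivity) (by norm_num), div_pow, ← mul_le_mul_iff_left₀ hpos]
  refine (hmarkov.trans hmom).trans ?_
  rw [hexp]
  calc (n : ℝ) ^ s * (n ! * (Real.exp 1 * (Real.exp 1 ^ n * (Real.exp 0.3502 ^ s) ^ n)))
      = (n : ℝ) ^ s * (Real.exp 1 * (n ! * Real.exp 1 ^ n) * (Real.exp 0.3502 ^ s) ^ n) := by ring
    _ ≤ n * (Real.exp 1 * (Real.exp 1 * (n : ℝ) ^ (n + 1)) * (Real.exp 0.3502 ^ s) ^ n) := by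
        gcongr
    _ = Real.exp 1 ^ 2 * (n : ℝ) ^ 2 * (Real.exp 0.3502 ^ s) ^ n * (n : ℝ) ^ n := by ring
    _ ≤ Real.exp 1 ^ 2 * (n : ℝ) ^ 2 * (Real.exp 0.3502 ^ s) ^ n * ((n : ℝ) ^ 2 * t) := by gcongr
    _ = _ := by field_simp

end Limit

/-- A.a.s. the number of subtrees of a uniformly random labelled tree on `n` vertices
is at most `1.41960 ^ n`. -/
theorem aas_subtree_upper_bound_141960 :
    Tendsto (fun n : ℕ =>
      treeProb n (fun G => (subtreeCount G : ℝ) ≤ (1.41960 : ℝ) ^ n))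
      atTop (𝓝 1) := by
  classical
  obtain ⟨r, hr0, hr1, hr⟩ := exists_ratio
  have hlim : Tendsto (fun n : ℕ => 1 - Real.exp 1 ^ 2 * ((n : ℝ) ^ 4 * r ^ n)) atTop (𝓝 1) := by
    have h := ((tendsto_pow_const_mul_const_pow_of_lt_one 4 hr0 hr1).const_mul
      (Real.exp 1 ^ 2)).const_sub 1
    rwa [mul_zero, sub_zero] at h
  have hsplit : ∀ n : ℕ,
      (Nat.card {G : SimpleGraph (Fin n) //
        G.IsTree ∧ (subtreeCount G : ℝ) ≤ (1.41960 : ℝ) ^ n} : ℝ) +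
      (Nat.card {G : SimpleGraph (Fin n) //
        G.IsTree ∧ ¬ (subtreeCount G : ℝ) ≤ (1.41960 : ℝ) ^ n} : ℝ) =
      Nat.card {G : SimpleGraph (Fin n) // G.IsTree} := by
    intro n
    simp only [Nat.card_eq_fintype_card, Fintype.card_subtype]
    rw [← Finset.filter_filter, ← Finset.filter_filter]
    exact_mod_cast Finset.card_filter_add_card_filter_not _
  have hpos : ∀ n : ℕ, 0 < n →
      (0 : ℝ) < Nat.card {G : SimpleGraph (Fin n) // G.IsTree} := by
    intro n hn
    obtain ⟨m, rfl⟩ := Nat.exists_eq_succ_of_ne_zero hn.ne'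
    have h1 := card_trees_ge (V := Fin (m + 1)) (n := m) (Fintype.card_fin _)
    have h2 : 0 < (m + 1) ^ m := by positivity
    exact_mod_cast Nat.pos_of_mul_pos_left (h2.trans_le h1)
  refine tendsto_of_tendsto_of_tendsto_of_le_of_le' hlim tendsto_const_nhds ?_ ?_
  · filter_upwards [eventually_gt_atTop 0] with n hn
    unfold treeProb
    rw [le_div_iff₀ (hpos n hn)]
    have := hr n hn
    have := hsplit n
    linarith
  · filter_upwards [eventually_gt_atTop 0] with n hn
    unfold treeProb
    rw [div_le_one (hpos n hn)]
    have := hsplit n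
    have h0 : (0 : ℝ) ≤ Nat.card {G : SimpleGraph (Fin n) //
        G.IsTree ∧ ¬ (subtreeCount G : ℝ) ≤ (1.41960 : ℝ) ^ n} := Nat.cast_nonneg _
    linarith
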